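/- For every real k ≠ 0, the quantity e_τ(k) := (1 − 2β_t·B(u*_τ(k)/√τ, τ))·τ^{−1/4} satisfies, as τ → 0+, e_τ(k) = e₀(k) + e₁(k)·τ^{1/4} + e₂(k)·τ^{1/2} + O(τ^{3/4}). -/

import Mathlib

open Filter Topology Asymptotics MeasureTheory

set_option linter.unusedVariables false

noncomputable section


/-- sign convention of the paper: 1 if `0 ≤ x`, -1 otherwise. -/
def sgn' (x : ℝ) : ℝ := if 0 ≤ x then 1 else -1

/-- principal-branch complex square root `d` of the Heston Riccati discriminant. -/
def hestD (κ ρ ξ : ℝ) (w : ℂ) : ℂ :=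
  (((κ : ℂ) - (ρ : ℂ) * (ξ : ℂ) * w) ^ 2 + w * (1 - w) * (ξ : ℂ) ^ 2) ^ ((1 : ℂ) / 2)

def hestGamma (κ ρ ξ : ℝ) (w : ℂ) : ℂ :=
  ((κ : ℂ) - (ρ : ℂ) * (ξ : ℂ) * w - hestD κ ρ ξ w) /
    ((κ : ℂ) - (ρ : ℂ) * (ξ : ℂ) * w + hestD κ ρ ξ w)

def hestB (κ ρ ξ : ℝ) (w : ℂ) (τ : ℝ) : ℂ :=
  (((κ : ℂ) - (ρ : ℂ) * (ξ : ℂ) * w - hestD κ ρ ξ w) / (ξ : ℂ) ^ 2) *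
    ((1 - Complex.exp (-(hestD κ ρ ξ w) * (τ : ℂ))) /
      (1 - hestGamma κ ρ ξ w * Complex.exp (-(hestD κ ρ ξ w) * (τ : ℂ))))

def hestA (κ θ ρ ξ : ℝ) (w : ℂ) (τ : ℝ) : ℂ :=
  ((κ * θ / ξ ^ 2 : ℝ) : ℂ) *
    (((κ : ℂ) - (ρ : ℂ) * (ξ : ℂ) * w - hestD κ ρ ξ w) * (τ : ℂ) -
      2 * Complex.log ((1 - hestGamma κ ρ ξ w * Complex.exp (-(hestD κ ρ ξ w) * (τ : ℂ))) /
        (1 - hestGamma κ ρ ξ w)))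

def betaT (κ ξ t : ℝ) : ℝ := ξ ^ 2 * (1 - Real.exp (-(κ * t))) / (4 * κ)

/-- explicit Heston forward log-mgf `G_τ(w)`. -/
def hestG (κ θ ξ v ρ t : ℝ) (w : ℂ) (τ : ℝ) : ℂ :=
  hestA κ θ ρ ξ w τ +
    hestB κ ρ ξ w τ * (v : ℂ) * ((Real.exp (-(κ * t)) : ℝ) : ℂ) /
      (1 - 2 * (betaT κ ξ t : ℂ) * hestB κ ρ ξ w τ) -
    ((2 * κ * θ / ξ ^ 2 : ℝ) : ℂ) *
      Complex.log (1 - 2 * (betaT κ ξ t : ℂ) * hestB κ ρ ξ w τ)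

/-- rescaled forward log-mgf, for complex argument. -/
def hestLambdaC (κ θ ξ v ρ t τ : ℝ) (z : ℂ) : ℂ :=
  ((Real.sqrt τ : ℝ) : ℂ) * hestG κ θ ξ v ρ t (z / ((Real.sqrt τ : ℝ) : ℂ)) τ

/-- rescaled forward log-mgf `Λ_τ(u) = √τ · G_τ(u/√τ)`. -/
def hestLambda (κ θ ξ v ρ t τ : ℝ) (u : ℝ) : ℂ :=
  hestLambdaC κ θ ξ v ρ t τ (u : ℂ)

/-- `D_{t,τ}`: the maximal open interval containing `0` on which `Λ_τ` is real-valued. -/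
def hestDom (κ θ ξ v ρ t τ : ℝ) : Set ℝ :=
  connectedComponentIn (interior {u : ℝ | (hestLambda κ θ ξ v ρ t τ u).im = 0}) 0



def B1hat (ρ ξ u : ℝ) : ℝ := u / 4 * (u ^ 2 * ρ * ξ - 2)
/-- the derivative of `B1hat` in `u`. -/
def B1hat' (ρ ξ u : ℝ) : ℝ := (3 * u ^ 2 * ρ * ξ - 2) / 4

def coefA0 (κ θ ξ v ρ t k : ℝ) : ℝ := sgn' k / Real.sqrt (betaT κ ξ t)

def coefA1 (κ θ ξ v ρ t k : ℝ) : ℝ :=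
  -(coefA0 κ θ ξ v ρ t k) * Real.sqrt v * Real.exp (-(κ * t) / 2) /
    (2 * Real.sqrt |k| * betaT κ ξ t ^ ((1 : ℝ) / 4))

def coefA2 (κ θ ξ v ρ t k : ℝ) : ℝ :=
  -(κ * θ) / (k * ξ ^ 2) - B1hat ρ ξ (coefA0 κ θ ξ v ρ t k) / coefA0 κ θ ξ v ρ t k

def coefA3 (κ θ ξ v ρ t k : ℝ) : ℝ :=
  (2 * betaT κ ξ t * coefA1 κ θ ξ v ρ t k ^ 3 / (ξ ^ 4 * v ^ 2)) *
    (ξ ^ 2 * v * betaT κ ξ t * Real.exp (κ * t) *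
        (|k| * ξ ^ 2 * Real.sqrt (betaT κ ξ t) * B1hat ρ ξ (coefA0 κ θ ξ v ρ t k) -
          k * ξ ^ 2 * B1hat' ρ ξ (coefA0 κ θ ξ v ρ t k) - κ * θ) +
      (2 * κ * θ * betaT κ ξ t * Real.exp (κ * t)) ^ 2 - ξ ^ 4 * v ^ 2 / 16)

def coefE0 (κ θ ξ v ρ t k : ℝ) : ℝ := -2 * coefA1 κ θ ξ v ρ t k / coefA0 κ θ ξ v ρ t k

def coefR (κ θ ξ v ρ t k : ℝ) : ℝ :=
  coefA1 κ θ ξ v ρ t k ^ 2 / 2 - κ * θ / (|k| * ξ ^ 2 * Real.sqrt (betaT κ ξ t))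

def coefE1 (κ θ ξ v ρ t k : ℝ) : ℝ := -2 * betaT κ ξ t * coefR κ θ ξ v ρ t k

def coefE2 (κ θ ξ v ρ t k : ℝ) : ℝ :=
  -2 * betaT κ ξ t *
    (coefA1 κ θ ξ v ρ t k * coefA2 κ θ ξ v ρ t k + coefA0 κ θ ξ v ρ t k * coefA3 κ θ ξ v ρ t k +
      coefA1 κ θ ξ v ρ t k * B1hat' ρ ξ (coefA0 κ θ ξ v ρ t k))

def coefZeta (κ θ ξ v ρ t k : ℝ) : ℝ :=
  2 * Real.sqrt v * Real.exp (-(κ * t) / 2) / coefE0 κ θ ξ v ρ t k ^ ((3 : ℝ) / 2)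

def coefPsi0 (κ θ ξ v ρ t k : ℝ) : ℝ :=
  (coefA0 κ θ ξ v ρ t k * v * Real.exp (-(κ * t)) / coefE0 κ θ ξ v ρ t k ^ 3) *
    (coefE0 κ θ ξ v ρ t k ^ 2 +
      coefA0 κ θ ξ v ρ t k * betaT κ ξ t *
        (3 * coefA1 κ θ ξ v ρ t k * coefE0 κ θ ξ v ρ t k -
          2 * coefA0 κ θ ξ v ρ t k * coefE1 κ θ ξ v ρ t k))

def coefPsi1 (κ θ ξ v ρ t k : ℝ) : ℝ :=
  -4 * coefA0 κ θ ξ v ρ t k * v * betaT κ ξ t * Real.exp (-(κ * t)) / coefE0 κ θ ξ v ρ t k ^ 4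

def coefPsi2 (κ θ ξ v ρ t k : ℝ) : ℝ :=
  (v * Real.exp (-(κ * t)) / (2 * coefE0 κ θ ξ v ρ t k ^ 4)) *
    (4 * coefA0 κ θ ξ v ρ t k * betaT κ ξ t *
        (3 * coefA0 κ θ ξ v ρ t k * coefE1 κ θ ξ v ρ t k -
          4 * coefA1 κ θ ξ v ρ t k * coefE0 κ θ ξ v ρ t k) -
      5 * coefE0 κ θ ξ v ρ t k ^ 2)

def coefPsi3 (κ θ ξ v ρ t k : ℝ) : ℝ :=
  8 * v * betaT κ ξ t * Real.exp (-(κ * t)) / coefE0 κ θ ξ v ρ t k ^ 5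

def coefPsi4 (κ θ ξ v ρ t k : ℝ) : ℝ :=
  (v * Real.exp (-(κ * t)) / (2 * coefE0 κ θ ξ v ρ t k ^ 3)) *
    ((coefE1 κ θ ξ v ρ t k ^ 2 - coefE0 κ θ ξ v ρ t k * coefE2 κ θ ξ v ρ t k) / betaT κ ξ t -
      2 * coefA0 κ θ ξ v ρ t k * coefA1 κ θ ξ v ρ t k * coefE0 κ θ ξ v ρ t k *
        coefE1 κ θ ξ v ρ t k +
      2 * coefE0 κ θ ξ v ρ t k ^ 2 * coefR κ θ ξ v ρ t k)

def coefPhi2a (κ θ ξ v ρ t k : ℝ) : ℝ :=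
  coefPsi2 κ θ ξ v ρ t k - coefPsi0 κ θ ξ v ρ t k ^ 2 / 2 -
    (4 * κ * θ * betaT κ ξ t / ξ ^ 2) * (2 * κ * θ + ξ ^ 2) / (coefE0 κ θ ξ v ρ t k ^ 2 * ξ ^ 2) -
    (4 * κ * θ * betaT κ ξ t / ξ ^ 2) *
      (coefA0 κ θ ξ v ρ t k * coefPsi0 κ θ ξ v ρ t k / coefE0 κ θ ξ v ρ t k)

def coefPhi2b (κ θ ξ v ρ t k : ℝ) : ℝ :=
  coefPsi3 κ θ ξ v ρ t k - coefPsi0 κ θ ξ v ρ t k * coefPsi1 κ θ ξ v ρ t k -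
    (4 * κ * θ * betaT κ ξ t / ξ ^ 2) *
      (coefA0 κ θ ξ v ρ t k * coefPsi1 κ θ ξ v ρ t k / coefE0 κ θ ξ v ρ t k)

def coefPhi2c (κ θ ξ v ρ t k : ℝ) : ℝ := -(coefPsi1 κ θ ξ v ρ t k ^ 2) / 2

def coefC0 (κ θ ξ v ρ t k : ℝ) : ℝ := 2 * |coefA1 κ θ ξ v ρ t k * k|

def coefC1 (κ θ ξ v ρ t k : ℝ) : ℝ :=
  (v * Real.exp (-(κ * t)) / coefE0 κ θ ξ v ρ t k) *
      (coefA0 κ θ ξ v ρ t k * coefA1 κ θ ξ v ρ t k -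
        coefE1 κ θ ξ v ρ t k / (2 * betaT κ ξ t * coefE0 κ θ ξ v ρ t k)) -
    coefA2 κ θ ξ v ρ t k * k

def coefC2 (κ θ ξ v ρ t k : ℝ) : ℝ := coefE0 κ θ ξ v ρ t k ^ (-(2 * κ * θ / ξ ^ 2))

def coefZ1 (κ θ ξ v ρ t k : ℝ) : ℝ :=
  coefPsi4 κ θ ξ v ρ t k - coefA3 κ θ ξ v ρ t k * k -
    (2 * κ * θ / ξ ^ 2) * (coefE1 κ θ ξ v ρ t k / coefE0 κ θ ξ v ρ t k)

def coefP1 (κ θ ξ v ρ t k : ℝ) : ℝ :=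
  coefE0 κ θ ξ v ρ t k + coefPhi2a κ θ ξ v ρ t k / coefZeta κ θ ξ v ρ t k ^ 2 +
    3 * coefPhi2b κ θ ξ v ρ t k / coefZeta κ θ ξ v ρ t k ^ 4 +
    15 * coefPhi2c κ θ ξ v ρ t k / coefZeta κ θ ξ v ρ t k ^ 6

def phi1C (κ θ ξ v ρ t k u : ℝ) : ℂ :=
  Complex.I * (u : ℂ) *
      ((coefPsi0 κ θ ξ v ρ t k +
          4 * coefA0 κ θ ξ v ρ t k * κ * θ * betaT κ ξ t / (coefE0 κ θ ξ v ρ t k * ξ ^ 2) : ℝ) : ℂ) +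
    Complex.I * (u : ℂ) ^ 3 * ((coefPsi1 κ θ ξ v ρ t k : ℝ) : ℂ)

def phi2R (κ θ ξ v ρ t k u : ℝ) : ℝ :=
  u ^ 2 * coefPhi2a κ θ ξ v ρ t k + u ^ 4 * coefPhi2b κ θ ξ v ρ t k +
    u ^ 6 * coefPhi2c κ θ ξ v ρ t k



/-! ### Entire functions `C` and `S` with `cosh z = C (z^2)`, `sinh z = z * S (z^2)` -/

def fC (X : ℝ) : ℝ :=
  FormalMultilinearSeries.ofScalarsSum (E := ℝ) (fun n : ℕ => (((2 * n).factorial : ℝ))⁻¹) X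

def fS (X : ℝ) : ℝ :=
  FormalMultilinearSeries.ofScalarsSum (E := ℝ) (fun n : ℕ => (((2 * n + 1).factorial : ℝ))⁻¹) X

lemma contDiff_ofScalarsSum (c : ℕ → ℝ) (hc : ∀ n, c n ≠ 0)
    (h : Tendsto (fun n => ‖c n.succ‖ / ‖c n‖) atTop (𝓝 0)) :
    ContDiff ℝ 1 (fun X : ℝ => FormalMultilinearSeries.ofScalarsSum (E := ℝ) c X) := by
  have hr : (FormalMultilinearSeries.ofScalars ℝ c).radius = ⊤ :=
    FormalMultilinearSeries.ofScalars_radius_eq_top_of_tendsto ℝ c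
      (Eventually.of_forall hc) h
  have hps := (FormalMultilinearSeries.ofScalars ℝ c).hasFPowerSeriesOnBall (by rw [hr]; simp)
  rw [hr] at hps
  have : AnalyticOnNhd ℝ (FormalMultilinearSeries.ofScalars ℝ c).sum Set.univ := by
    have := hps.analyticOnNhd
    simpa using this
  exact this.contDiff

lemma contDiff_fC : ContDiff ℝ 1 fC := by
  apply contDiff_ofScalarsSum
  · intro n; positivity
  · refine squeeze_zero (fun n => by positivity) (fun n => ?_)
      (tendsto_one_div_add_atTop_nhds_zero_nat (𝕜 := ℝ))
    rw [show 2 * n.succ = (2 * n + 1) + 1 by simp; ring, Nat.factorial_succ, Nat.factorial_succ]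
    have h1 : (0 : ℝ) < (2 * n).factorial := by positivity
    rw [norm_inv, norm_inv, Real.norm_of_nonneg (by positivity), Real.norm_of_nonneg (by positivity)]
    push_cast
    have h3 : ((2 * (n : ℝ) + 1 + 1) * ((2 * n + 1) * ((2 * n).factorial : ℝ)))⁻¹ /
        (((2 * n).factorial : ℝ))⁻¹ = 1 / ((2 * (n : ℝ) + 1 + 1) * (2 * n + 1)) := by
      field_simp
    rw [h3]
    have : (0 : ℝ) ≤ n := by positivity
    apply one_div_le_one_div_of_le (by positivity)
    nlinarith

lemma contDiff_fS : ContDiff ℝ 1 fS := by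
  apply contDiff_ofScalarsSum
  · intro n; positivity
  · refine squeeze_zero (fun n => by positivity) (fun n => ?_)
      (tendsto_one_div_add_atTop_nhds_zero_nat (𝕜 := ℝ))
    rw [show 2 * n.succ + 1 = (2 * n + 1 + 1) + 1 by simp; ring, Nat.factorial_succ,
      Nat.factorial_succ (2 * n + 1)]
    have h1 : (0 : ℝ) < (2 * n + 1).factorial := by positivity
    rw [norm_inv, norm_inv, Real.norm_of_nonneg (by positivity), Real.norm_of_nonneg (by positivity)]
    push_cast
    have h3 : ((2 * (n : ℝ) + 2 + 1) * ((2 * n + 1 + 1) * ((2 * n + 1).factorial : ℝ)))⁻¹ /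
        (((2 * n + 1).factorial : ℝ))⁻¹ = 1 / ((2 * (n : ℝ) + 2 + 1) * (2 * n + 1 + 1)) := by
      field_simp
    rw [h3]
    have : (0 : ℝ) ≤ n := by positivity
    apply one_div_le_one_div_of_le (by positivity)
    nlinarith

lemma fC_zero : fC 0 = 1 := by
  simp [fC, FormalMultilinearSeries.ofScalarsSum_zero]

lemma fS_zero : fS 0 = 1 := by
  simp [fS, FormalMultilinearSeries.ofScalarsSum_zero]

lemma cosh_eq_fC (z : ℂ) (X : ℝ) (h : z ^ 2 = (X : ℂ)) : Complex.cosh z = (fC X : ℂ) := by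
  rw [Complex.cosh_eq_tsum, fC, FormalMultilinearSeries.ofScalars_sum_eq, Complex.ofReal_tsum]
  congr 1
  ext n
  rw [pow_mul, h]
  push_cast [smul_eq_mul]
  rw [div_eq_inv_mul]

lemma sinh_eq_fS (z : ℂ) (X : ℝ) (h : z ^ 2 = (X : ℂ)) : Complex.sinh z = z * (fS X : ℂ) := by
  rw [Complex.sinh_eq_tsum, fS, FormalMultilinearSeries.ofScalars_sum_eq, Complex.ofReal_tsum,
    ← tsum_mul_left]
  congr 1
  ext n
  rw [pow_succ, pow_mul, h]
  push_cast [smul_eq_mul]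
  rw [div_eq_inv_mul]
  ring

lemma hasDerivAt_fC (X : ℝ) : HasDerivAt fC (deriv fC X) X :=
  (contDiff_fC.differentiable (by norm_num) X).hasDerivAt

lemma hasDerivAt_fS (X : ℝ) : HasDerivAt fS (deriv fS X) X :=
  (contDiff_fS.differentiable (by norm_num) X).hasDerivAt

lemma continuous_dfC : Continuous (deriv fC) := contDiff_fC.continuous_deriv (by norm_num)

lemma continuous_dfS : Continuous (deriv fS) := contDiff_fS.continuous_deriv (by norm_num)

lemma continuous_dslope_zero (f : ℝ → ℝ) (hf : Differentiable ℝ f) : Continuous (dslope f 0) := by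
  rw [continuous_iff_continuousAt]
  intro x
  by_cases hx : x = 0
  · subst hx; exact continuousAt_dslope_same.2 (hf 0)
  · exact (continuousAt_dslope_of_ne hx).2 (hf x).continuousAt

lemma fC_expand (X : ℝ) : fC X = 1 + X * dslope fC 0 X := by
  have := sub_smul_dslope fC 0 X
  rw [fC_zero] at this
  simp at this
  linarith

lemma fS_expand (X : ℝ) : fS X = 1 + X * dslope fS 0 X := by
  have := sub_smul_dslope fS 0 X
  rw [fS_zero] at this
  simp at this
  linarith


/-! ### Boundedness calculus as `τ → 0+` -/

@[fun_prop]
def Bdd (f : ℝ → ℝ) : Prop := ∃ K, ∀ᶠ τ in 𝓝[>] (0 : ℝ), |f τ| ≤ K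

@[fun_prop]
lemma Bdd.const (c : ℝ) : Bdd (fun _ => c) := ⟨|c|, by simp⟩

@[fun_prop]
lemma Bdd.add {f g : ℝ → ℝ} (hf : Bdd f) (hg : Bdd g) : Bdd (fun τ => f τ + g τ) := by
  obtain ⟨K, hK⟩ := hf
  obtain ⟨L, hL⟩ := hg
  refine ⟨K + L, ?_⟩
  filter_upwards [hK, hL] with τ h1 h2
  exact (abs_add_le _ _).trans (add_le_add h1 h2)

@[fun_prop]
lemma Bdd.neg {f : ℝ → ℝ} (hf : Bdd f) : Bdd (fun τ => - f τ) := by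
  obtain ⟨K, hK⟩ := hf
  exact ⟨K, by simpa using hK⟩

@[fun_prop]
lemma Bdd.sub {f g : ℝ → ℝ} (hf : Bdd f) (hg : Bdd g) : Bdd (fun τ => f τ - g τ) := by
  simpa [sub_eq_add_neg] using hf.add hg.neg

@[fun_prop]
lemma Bdd.mul {f g : ℝ → ℝ} (hf : Bdd f) (hg : Bdd g) : Bdd (fun τ => f τ * g τ) := by
  obtain ⟨K, hK⟩ := hf
  obtain ⟨L, hL⟩ := hg
  refine ⟨K * L, ?_⟩
  filter_upwards [hK, hL] with τ h1 h2
  rw [abs_mul]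
  exact mul_le_mul h1 h2 (abs_nonneg _) ((abs_nonneg _).trans h1)

@[fun_prop]
lemma Bdd.pow {f : ℝ → ℝ} (hf : Bdd f) (n : ℕ) : Bdd (fun τ => f τ ^ n) := by
  induction n with
  | zero => simpa using Bdd.const 1
  | succ n ih => simpa [pow_succ] using ih.mul hf

@[fun_prop]
lemma Bdd.div_const {f : ℝ → ℝ} (hf : Bdd f) (c : ℝ) : Bdd (fun τ => f τ / c) := by
  simpa [div_eq_mul_inv] using hf.mul (Bdd.const c⁻¹)

lemma Bdd.congr {f g : ℝ → ℝ} (hf : Bdd f) (h : ∀ᶠ τ in 𝓝[>] (0 : ℝ), g τ = f τ) : Bdd g := by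
  obtain ⟨K, hK⟩ := hf
  refine ⟨K, ?_⟩
  filter_upwards [hK, h] with τ h1 h2
  rwa [h2]

lemma Bdd.comp {f g : ℝ → ℝ} (hg : Continuous g) (hf : Bdd f) : Bdd (fun τ => g (f τ)) := by
  obtain ⟨K, hK⟩ := hf
  obtain ⟨L, hL⟩ := (isCompact_Icc (a := -K) (b := K)).exists_bound_of_continuousOn hg.continuousOn
  refine ⟨L, ?_⟩
  filter_upwards [hK] with τ h1
  exact hL _ (abs_le.1 h1)

lemma Bdd.div {f g : ℝ → ℝ} (hf : Bdd f) (δ : ℝ) (hδ : 0 < δ)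
    (hg : ∀ᶠ τ in 𝓝[>] (0 : ℝ), δ ≤ |g τ|) : Bdd (fun τ => f τ / g τ) := by
  obtain ⟨K, hK⟩ := hf
  refine ⟨K / δ, ?_⟩
  filter_upwards [hK, hg] with τ h1 h2
  rw [abs_div]
  exact div_le_div₀ ((abs_nonneg _).trans h1) h1 hδ h2

/-- `h = τ^{1/4}`, written as an iterated square root. -/
def hh (τ : ℝ) : ℝ := Real.sqrt (Real.sqrt τ)

lemma hh_tendsto : Tendsto hh (𝓝[>] (0 : ℝ)) (𝓝 0) := by
  have : Tendsto hh (𝓝 (0 : ℝ)) (𝓝 (hh 0)) := by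
    apply Continuous.tendsto
    unfold hh
    fun_prop
  simp only [hh, Real.sqrt_zero] at this
  exact this.mono_left nhdsWithin_le_nhds

lemma hh_pos : ∀ᶠ τ in 𝓝[>] (0 : ℝ), 0 < hh τ := by
  filter_upwards [self_mem_nhdsWithin] with τ hτ
  exact Real.sqrt_pos.2 (Real.sqrt_pos.2 hτ)

@[fun_prop]
lemma bdd_hh : Bdd hh := by
  refine ⟨1, ?_⟩
  have := hh_tendsto.eventually (Metric.ball_mem_nhds (0 : ℝ) one_pos)
  filter_upwards [this] with τ h
  simp [Real.norm_eq_abs] at h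
  exact h.le

lemma Bdd.small {f : ℝ → ℝ} (hf : Bdd f) (ε : ℝ) (hε : 0 < ε) :
    ∀ᶠ τ in 𝓝[>] (0 : ℝ), |hh τ * f τ| < ε := by
  obtain ⟨K, hK⟩ := hf
  have hK' : 0 < |K| + 1 := by positivity
  have := hh_tendsto.eventually (Metric.ball_mem_nhds (0 : ℝ) (div_pos hε hK'))
  filter_upwards [this, hK] with τ h1 h2
  simp [Real.norm_eq_abs] at h1
  rw [abs_mul]
  calc |hh τ| * |f τ| ≤ |hh τ| * |K| := 
        mul_le_mul_of_nonneg_left (h2.trans (le_abs_self _)) (abs_nonneg _)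
    _ ≤ |hh τ| * (|K| + 1) := by gcongr; linarith
    _ < ε := by rwa [lt_div_iff₀ hK'] at h1


/-! ### The asymptotic core -/

set_option maxHeartbeats 4000000 in
lemma core_asymp (k β m c ρ ξ a0 e0 e1 e2 : ℝ) (hk : k ≠ 0) (hβ : 0 < β) (hm : 0 < m) (hc : 0 ≤ c)
    (ha0 : β * a0 ^ 2 = 1) (hka : 0 < k * a0) (he0 : 0 < e0)
    (E0 : k * e0 ^ 2 = a0 * m) (E1 : 2 * k * e1 = a0 * (c - m / 2))
    (E2 : k * (e1 ^ 2 + 2 * e0 * e2) = a0 * (m * (-e1 / 2 - e0 ^ 2 / 8 - β * B1hat ρ ξ a0)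
      - c * e0 ^ 2 / 2 + c * e1) + m * B1hat' ρ ξ a0)
    (u e α b2 b' : ℝ → ℝ) (hu : Bdd u) (hα : Bdd α) (hb2 : Bdd b2) (hb' : Bdd b')
    (hpos : ∀ᶠ τ in 𝓝[>] (0 : ℝ), 0 < e τ)
    (h1 : ∀ᶠ τ in 𝓝[>] (0 : ℝ), hh τ * e τ =
      1 - β * u τ ^ 2 - 2 * β * hh τ ^ 2 * B1hat ρ ξ (u τ) - 2 * β * hh τ ^ 4 * b2 τ)
    (h2 : ∀ᶠ τ in 𝓝[>] (0 : ℝ), k * e τ ^ 2 = hh τ ^ 4 * α τ * e τ ^ 2 +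
      (u τ + hh τ ^ 2 * B1hat' ρ ξ (u τ) + hh τ ^ 4 * b' τ) * (m + c * (hh τ * e τ))) :
    (∀ᶠ τ in 𝓝[>] (0 : ℝ), 1 / 2 ≤ β * u τ ^ 2) ∧
    ∃ g : ℝ → ℝ, Bdd g ∧ ∀ᶠ τ in 𝓝[>] (0 : ℝ),
      e τ - (e0 + e1 * hh τ + e2 * hh τ ^ 2) = hh τ ^ 3 * g τ := by
  have hb1 : Bdd (fun τ => B1hat ρ ξ (u τ)) := by unfold B1hat; fun_prop
  have hb1' : Bdd (fun τ => B1hat' ρ ξ (u τ)) := by unfold B1hat'; fun_prop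
  have hE : Bdd (fun τ => hh τ * e τ) := Bdd.congr (by fun_prop) h1
  have hkabs : 0 < |k| := abs_pos.2 hk
  -- e is bounded
  have hsm1 : ∀ᶠ τ in 𝓝[>] (0 : ℝ), |hh τ * (hh τ ^ 3 * α τ)| < |k| / 2 :=
    Bdd.small (by fun_prop) _ (by positivity)
  have hlow : ∀ᶠ τ in 𝓝[>] (0 : ℝ), |k| / 2 ≤ |k - hh τ ^ 4 * α τ| := by
    filter_upwards [hsm1] with τ h
    have h3 := abs_sub_abs_le_abs_sub k (hh τ ^ 4 * α τ)
    have h4 : hh τ * (hh τ ^ 3 * α τ) = hh τ ^ 4 * α τ := by ring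
    rw [h4] at h
    linarith
  have he2 : Bdd (fun τ => e τ ^ 2) := by
    have : Bdd (fun τ => ((u τ + hh τ ^ 2 * B1hat' ρ ξ (u τ) + hh τ ^ 4 * b' τ) *
        (m + c * (hh τ * e τ))) / (k - hh τ ^ 4 * α τ)) :=
      Bdd.div (by fun_prop) (|k| / 2) (by positivity) hlow
    refine this.congr ?_
    filter_upwards [h2, hlow] with τ h3 h4
    have : k - hh τ ^ 4 * α τ ≠ 0 := by
      intro h0; rw [h0] at h4; simp at h4; linarith
    rw [eq_div_iff this]
    linarith
  have he : Bdd e := by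
    obtain ⟨K, hK⟩ := he2
    refine ⟨1 + K, ?_⟩
    filter_upwards [hK] with τ h
    rw [abs_pow] at h
    nlinarith [abs_nonneg (e τ)]
  -- u² near 1/β
  have hu2 : ∀ᶠ τ in 𝓝[>] (0 : ℝ), 1 / 2 ≤ β * u τ ^ 2 := by
    have := Bdd.small (f := fun τ => e τ + 2 * β * hh τ * B1hat ρ ξ (u τ) + 2 * β * hh τ ^ 3 * b2 τ)
      (by fun_prop) (1 / 2) (by norm_num)
    filter_upwards [this, h1] with τ h3 h4
    have := (abs_lt.1 h3).2
    nlinarith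
  refine ⟨hu2, ?_⟩
  -- sign of u
  have hsign : ∀ᶠ τ in 𝓝[>] (0 : ℝ), 0 < k * u τ := by
    have hs := Bdd.small (f := fun τ => k * (hh τ * B1hat' ρ ξ (u τ) + hh τ ^ 3 * b' τ))
      (by fun_prop) 1 one_pos
    have hs' := Bdd.small (f := fun τ => hh τ * (k * (hh τ * B1hat' ρ ξ (u τ) + hh τ ^ 3 * b' τ)) ^ 2)
      (by fun_prop) (k ^ 2 / (2 * β)) (by positivity)
    filter_upwards [hu2, hs', hsm1, h2, hpos, hh_pos] with τ g1 g2 g3 g4 g5 g6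
    set w := k * (hh τ * B1hat' ρ ξ (u τ) + hh τ ^ 3 * b' τ) with hw
    have p1 : 0 < m + c * (hh τ * e τ) := by positivity
    have p2 : 0 < k * (k - hh τ ^ 4 * α τ) := by
      have q1 : hh τ ^ 4 * α τ = hh τ * (hh τ ^ 3 * α τ) := by ring
      rw [q1]
      have q2 : |k * (hh τ * (hh τ ^ 3 * α τ))| ≤ k ^ 2 / 2 := by
        rw [abs_mul, ← sq_abs k]; nlinarith
      have := (abs_le.1 q2).2
      have : 0 < k ^ 2 := by positivity
      nlinarith
    have p3 : 0 < (k * u τ + hh τ * w) * (m + c * (hh τ * e τ)) := by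
      have : (k * u τ + hh τ * w) * (m + c * (hh τ * e τ)) =
          (k * (k - hh τ ^ 4 * α τ)) * e τ ^ 2 := by
        rw [hw]; linear_combination (-k) * g4
      rw [this]; positivity
    have p4 : 0 < k * u τ + hh τ * w := (pos_iff_pos_of_mul_pos p3).2 p1
    by_contra hcon
    push Not at hcon
    have p5 : (k * u τ) ^ 2 ≤ (hh τ * w) ^ 2 :=
      sq_le_sq' (by linarith) (by linarith)
    have p6 : k ^ 2 / (2 * β) ≤ (k * u τ) ^ 2 := by
      rw [div_le_iff₀ (by positivity)]
      linarith [mul_le_mul_of_nonneg_left g1 (sq_nonneg k),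
        show k ^ 2 * (β * u τ ^ 2) = (k * u τ) ^ 2 * (2 * β) / 2 by ring]
    have p7 := (abs_lt.1 g2).2
    linarith [show (hh τ * w) ^ 2 = hh τ * (hh τ * w ^ 2) by ring]
  have hua : ∀ᶠ τ in 𝓝[>] (0 : ℝ), 0 < a0 * u τ := by
    filter_upwards [hsign] with τ h
    have : 0 < (k * a0) * (k * u τ) := by positivity
    have h5 : 0 < k ^ 2 * (a0 * u τ) := by linarith [show (k * a0) * (k * u τ) = k ^ 2 * (a0 * u τ) by ring]
    exact (pos_iff_pos_of_mul_pos h5).1 (by positivity)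
  have ha0ne : a0 ≠ 0 := by rintro rfl; simp at ha0
  have ha0abs : 0 < |a0| := abs_pos.2 ha0ne
  have hsum : ∀ᶠ τ in 𝓝[>] (0 : ℝ), |a0| ≤ |u τ + a0| := by
    filter_upwards [hua] with τ h
    apply sq_le_sq.1
    nlinarith [sq_nonneg (u τ)]
  -- u = a0 + h z
  obtain ⟨z, hz, huz⟩ : ∃ z : ℝ → ℝ, Bdd z ∧ ∀ᶠ τ in 𝓝[>] (0 : ℝ), u τ = a0 + hh τ * z τ := by
    refine ⟨fun τ => (-(e τ + 2 * β * hh τ * B1hat ρ ξ (u τ) + 2 * β * hh τ ^ 3 * b2 τ) / β)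
      / (u τ + a0), Bdd.div (by fun_prop) _ ha0abs hsum, ?_⟩
    filter_upwards [h1, hsum] with τ g1 g2
    have hne : u τ + a0 ≠ 0 := by
      intro h0; rw [h0] at g2; simp at g2; exact ha0ne g2
    field_simp
    linear_combination g1 - ha0
  have hB1 : ∀ᶠ τ in 𝓝[>] (0 : ℝ), B1hat ρ ξ (u τ) = B1hat ρ ξ a0 +
      hh τ * (z τ * ((u τ ^ 2 + u τ * a0 + a0 ^ 2) * ρ * ξ - 2) / 4) := by
    filter_upwards [huz] with τ g
    unfold B1hat; rw [g]; ring
  have hB1' : ∀ᶠ τ in 𝓝[>] (0 : ℝ), B1hat' ρ ξ (u τ) = B1hat' ρ ξ a0 +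
      hh τ * (3 * ρ * ξ * z τ * (u τ + a0) / 4) := by
    filter_upwards [huz] with τ g
    unfold B1hat'; rw [g]; ring
  -- second order expansion of u
  set b := B1hat ρ ξ a0 with hbdef
  set bp := B1hat' ρ ξ a0 with hbpdef
  set y1 : ℝ → ℝ := fun τ => z τ * ((u τ ^ 2 + u τ * a0 + a0 ^ 2) * ρ * ξ - 2) / 4 with hy1
  set y2 : ℝ → ℝ := fun τ => 3 * ρ * ξ * z τ * (u τ + a0) / 4 with hy2
  have hy1b : Bdd y1 := by rw [hy1]; fun_prop
  have hy2b : Bdd y2 := by rw [hy2]; fun_prop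
  set U : ℝ → ℝ := fun τ => a0 * (1 - hh τ * e τ / 2 - hh τ ^ 2 * (e τ ^ 2 / 8 + β * b)) with hU
  have hUb : Bdd U := by rw [hU]; fun_prop
  have hUa : ∀ᶠ τ in 𝓝[>] (0 : ℝ), 0 < a0 * U τ := by
    have := Bdd.small (f := fun τ => e τ / 2 + hh τ * (e τ ^ 2 / 8 + β * b)) (by fun_prop) 1 one_pos
    filter_upwards [this] with τ g
    have g1 := (abs_lt.1 g).2
    have : a0 * U τ = a0 ^ 2 * (1 - hh τ * (e τ / 2 + hh τ * (e τ ^ 2 / 8 + β * b))) := by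
      simp only [hU]; ring
    rw [this]
    have : 0 < 1 - hh τ * (e τ / 2 + hh τ * (e τ ^ 2 / 8 + β * b)) := by linarith
    positivity
  obtain ⟨δ, hδ, hUu⟩ : ∃ δ > 0, ∀ᶠ τ in 𝓝[>] (0 : ℝ), δ ≤ |u τ + U τ| := by
    refine ⟨Real.sqrt (1 / (2 * β)), by positivity, ?_⟩
    filter_upwards [hUa, hua, hu2] with τ g1 g2 g3
    rw [← Real.sqrt_sq_eq_abs]
    apply Real.sqrt_le_sqrt
    have g4 : 0 < a0 ^ 2 * (u τ * U τ) := by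
      linarith [mul_pos g1 g2, show a0 * U τ * (a0 * u τ) = a0 ^ 2 * (u τ * U τ) by ring]
    have g5 : 0 < u τ * U τ := (pos_iff_pos_of_mul_pos g4).1 (by positivity)
    have g6 : 1 / (2 * β) ≤ u τ ^ 2 := by
      rw [div_le_iff₀ (by positivity)]; linarith
    linarith [sq_nonneg (U τ), show (u τ + U τ) ^ 2 = u τ ^ 2 + 2 * (u τ * U τ) + U τ ^ 2 by ring]
  obtain ⟨z3, hz3, huz3⟩ : ∃ z3 : ℝ → ℝ, Bdd z3 ∧ ∀ᶠ τ in 𝓝[>] (0 : ℝ),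
      u τ = U τ + hh τ ^ 3 * z3 τ := by
    refine ⟨fun τ => (a0 ^ 2 * (-2 * β * y1 τ - 2 * β * hh τ * b2 τ - e τ * (e τ ^ 2 / 8 + β * b)
      - hh τ * (e τ ^ 2 / 8 + β * b) ^ 2)) / (u τ + U τ), Bdd.div (by fun_prop) δ hδ hUu, ?_⟩
    filter_upwards [h1, hUu, hB1] with τ g1 g2 g3
    have hne : u τ + U τ ≠ 0 := by
      intro h0; rw [h0] at g2; simp at g2; linarith
    rw [g3] at g1
    have key : (u τ - U τ) * (u τ + U τ) = hh τ ^ 3 * (a0 ^ 2 * (-2 * β * y1 τ - 2 * β * hh τ * b2 τ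
      - e τ * (e τ ^ 2 / 8 + β * b) - hh τ * (e τ ^ 2 / 8 + β * b) ^ 2)) := by
      simp only [hU]
      linear_combination a0 ^ 2 * g1 - (u τ) ^ 2 * ha0
    field_simp
    linarith
  -- the quadratic equation for e
  set eh : ℝ → ℝ := fun τ => e0 + e1 * hh τ + e2 * hh τ ^ 2 with heh
  have hehb : Bdd eh := by rw [heh]; fun_prop
  set Q := β * b - bp / a0 with hQ
  set W : ℝ → ℝ := fun τ => k * (e τ + eh τ) + hh τ * (a0 * m / 2 - a0 * c
    + hh τ * ((e τ + eh τ) * (a0 * m / 8 + a0 * c / 2) + hh τ *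
      (a0 * c * Q + a0 * c * (e τ ^ 2 + e τ * eh τ + eh τ ^ 2) / 8))) with hW
  obtain ⟨δ', hδ', hWl⟩ : ∃ δ > 0, ∀ᶠ τ in 𝓝[>] (0 : ℝ), δ ≤ |W τ| := by
    refine ⟨|k| * e0 / 4, by positivity, ?_⟩
    have w1 := Bdd.small (f := fun τ => (a0 * m / 2 - a0 * c
      + hh τ * ((e τ + eh τ) * (a0 * m / 8 + a0 * c / 2) + hh τ *
        (a0 * c * Q + a0 * c * (e τ ^ 2 + e τ * eh τ + eh τ ^ 2) / 8)))) (by fun_prop)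
      (|k| * e0 / 4) (by positivity)
    have w2 := Bdd.small (f := fun τ => e1 + e2 * hh τ) (by fun_prop) (e0 / 2) (by positivity)
    filter_upwards [w1, w2, hpos] with τ g1 g2 g3
    have g4 : e0 / 2 ≤ e τ + eh τ := by
      have := (abs_lt.1 g2).1
      simp only [heh]
      linarith [show e1 * hh τ + e2 * hh τ ^ 2 = hh τ * (e1 + e2 * hh τ) by ring]
    have g5 : |k| * e0 / 2 ≤ |k * (e τ + eh τ)| := by
      rw [abs_mul, abs_of_nonneg (a := e τ + eh τ) (by linarith)]
      linarith [mul_le_mul_of_nonneg_left g4 hkabs.le]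
    have g6 := abs_sub_abs_le_abs_sub (k * (e τ + eh τ)) (-(hh τ * (a0 * m / 2 - a0 * c
      + hh τ * ((e τ + eh τ) * (a0 * m / 8 + a0 * c / 2) + hh τ *
        (a0 * c * Q + a0 * c * (e τ ^ 2 + e τ * eh τ + eh τ ^ 2) / 8)))))
    rw [abs_neg, sub_neg_eq_add] at g6
    simp only [hW]
    linarith
  refine ⟨fun τ => ((hh τ * α τ * e τ ^ 2 + (z3 τ + y2 τ + hh τ * b' τ) * (m + c * (hh τ * e τ)))
    - (k * (2 * e1 * e2 + hh τ * e2 ^ 2) - a0 * e2 * (c - m / 2)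
      + a0 * (c / 2 + m / 8) * (e1 + e2 * hh τ) * (eh τ + e0)
      + a0 * c * eh τ * (eh τ ^ 2 / 8 + Q))) / W τ, Bdd.div (by fun_prop) δ' hδ' hWl, ?_⟩
  filter_upwards [h2, hB1', huz3, hWl] with τ g1 g2 g3 g4
  have hne : W τ ≠ 0 := by
    intro h0; rw [h0] at g4; simp at g4; linarith
  have hQ' : a0 * Q = a0 * β * b - bp := by rw [hQ]; field_simp
  rw [← mul_div_assoc, eq_div_iff hne]
  have g1' : k * e τ ^ 2 = hh τ ^ 4 * α τ * e τ ^ 2 + (U τ + hh τ ^ 3 * z3 τ +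
      hh τ ^ 2 * (bp + hh τ * y2 τ) + hh τ ^ 4 * b' τ) * (m + c * (hh τ * e τ)) := by
    rw [← g3, ← g2]; exact g1
  have T1 : k * e τ ^ 2 - a0 * (1 - hh τ * e τ / 2 - hh τ ^ 2 * (e τ ^ 2 / 8 + Q)) *
      (m + c * (hh τ * e τ)) = hh τ ^ 3 * (hh τ * α τ * e τ ^ 2 +
        (z3 τ + y2 τ + hh τ * b' τ) * (m + c * (hh τ * e τ))) := by
    simp only [hU] at g1'
    linear_combination g1' + hh τ ^ 2 * (m + c * (hh τ * e τ)) * hQ'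
  have T2 : k * eh τ ^ 2 - a0 * (1 - hh τ * eh τ / 2 - hh τ ^ 2 * (eh τ ^ 2 / 8 + Q)) *
      (m + c * (hh τ * eh τ)) = hh τ ^ 3 * (k * (2 * e1 * e2 + hh τ * e2 ^ 2) - a0 * e2 * (c - m / 2)
      + a0 * (c / 2 + m / 8) * (e1 + e2 * hh τ) * (eh τ + e0)
      + a0 * c * eh τ * (eh τ ^ 2 / 8 + Q)) := by
    have hx : eh τ = e0 + e1 * hh τ + e2 * hh τ ^ 2 := rfl
    rw [hx]
    linear_combination E0 + hh τ * e0 * E1 + hh τ ^ 2 * E2 + hh τ ^ 2 * m * hQ'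
  have T3 : (e τ - eh τ) * W τ = (k * e τ ^ 2 - a0 * (1 - hh τ * e τ / 2 -
      hh τ ^ 2 * (e τ ^ 2 / 8 + Q)) * (m + c * (hh τ * e τ))) - (k * eh τ ^ 2 - a0 *
      (1 - hh τ * eh τ / 2 - hh τ ^ 2 * (eh τ ^ 2 / 8 + Q)) * (m + c * (hh τ * eh τ))) := by
    simp only [hW]; ring
  change (e τ - eh τ) * W τ = _
  rw [T3, T1, T2]
  ring


/-! ### Real closed forms -/

def rx (κ ρ ξ u s : ℝ) : ℝ := ((κ * s - ρ * ξ * u) ^ 2 + u * (s - u) * ξ ^ 2) / 4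
def rxd (κ ρ ξ u s : ℝ) : ℝ := (-2 * ρ * ξ * (κ * s - ρ * ξ * u) + ξ ^ 2 * (s - 2 * u)) / 4
def rX (κ ρ ξ u s : ℝ) : ℝ := s ^ 2 * rx κ ρ ξ u s
def rY (κ ρ ξ u s : ℝ) : ℝ := s * (κ * s - ρ * ξ * u)
def rP (κ ρ ξ u s : ℝ) : ℝ :=
  fC (rX κ ρ ξ u s) + rY κ ρ ξ u s / 2 * fS (rX κ ρ ξ u s)
def rB (κ ρ ξ u s : ℝ) : ℝ := (u ^ 2 - u * s) / 2 * fS (rX κ ρ ξ u s) / rP κ ρ ξ u s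
def rPd (κ ρ ξ u s : ℝ) : ℝ :=
  deriv fC (rX κ ρ ξ u s) * (s ^ 2 * rxd κ ρ ξ u s) +
    (-(s * (ρ * ξ)) / 2 * fS (rX κ ρ ξ u s) +
      rY κ ρ ξ u s / 2 * (deriv fS (rX κ ρ ξ u s) * (s ^ 2 * rxd κ ρ ξ u s)))
def rNd (κ ρ ξ u s : ℝ) : ℝ :=
  (2 * u - s) / 2 * fS (rX κ ρ ξ u s) +
    (u ^ 2 - u * s) / 2 * (deriv fS (rX κ ρ ξ u s) * (s ^ 2 * rxd κ ρ ξ u s))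
def rBd (κ ρ ξ u s : ℝ) : ℝ :=
  (rNd κ ρ ξ u s * rP κ ρ ξ u s -
    (u ^ 2 - u * s) / 2 * fS (rX κ ρ ξ u s) * rPd κ ρ ξ u s) / rP κ ρ ξ u s ^ 2
def rA (κ θ ρ ξ u s : ℝ) : ℝ :=
  κ * θ / ξ ^ 2 * (rY κ ρ ξ u s - 2 * Real.log (rP κ ρ ξ u s))
def rAd (κ θ ρ ξ u s : ℝ) : ℝ :=
  κ * θ / ξ ^ 2 * (-(s * (ρ * ξ)) - 2 * (rPd κ ρ ξ u s / rP κ ρ ξ u s))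

lemma hasDerivAt_rX (κ ρ ξ u s : ℝ) :
    HasDerivAt (fun u => rX κ ρ ξ u s) (s ^ 2 * rxd κ ρ ξ u s) u := by
  unfold rX rx rxd
  have h1 : HasDerivAt (fun u : ℝ => κ * s - ρ * ξ * u) (-(ρ * ξ)) u := by
    simpa using ((hasDerivAt_id u).const_mul (ρ * ξ)).const_sub (κ * s)
  have h2 : HasDerivAt (fun u : ℝ => s - u) (-1) u := by
    simpa using (hasDerivAt_id u).const_sub s
  have h3 := ((((h1.pow 2).add (((hasDerivAt_id u).mul h2).mul_const (ξ ^ 2))).div_const 4).const_mul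
    (s ^ 2))
  refine h3.congr_deriv ?_
  simp only [id]
  push_cast
  ring

lemma hasDerivAt_rY (κ ρ ξ u s : ℝ) :
    HasDerivAt (fun u => rY κ ρ ξ u s) (-(s * (ρ * ξ))) u := by
  unfold rY
  have h1 : HasDerivAt (fun u : ℝ => κ * s - ρ * ξ * u) (-(ρ * ξ)) u := by
    simpa using ((hasDerivAt_id u).const_mul (ρ * ξ)).const_sub (κ * s)
  simpa using h1.const_mul s

lemma hasDerivAt_fCX (κ ρ ξ u s : ℝ) :
    HasDerivAt (fun u => fC (rX κ ρ ξ u s))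
      (deriv fC (rX κ ρ ξ u s) * (s ^ 2 * rxd κ ρ ξ u s)) u :=
  (hasDerivAt_fC _).comp u (hasDerivAt_rX κ ρ ξ u s)

lemma hasDerivAt_fSX (κ ρ ξ u s : ℝ) :
    HasDerivAt (fun u => fS (rX κ ρ ξ u s))
      (deriv fS (rX κ ρ ξ u s) * (s ^ 2 * rxd κ ρ ξ u s)) u :=
  (hasDerivAt_fS _).comp u (hasDerivAt_rX κ ρ ξ u s)

lemma hasDerivAt_rP (κ ρ ξ u s : ℝ) :
    HasDerivAt (fun u => rP κ ρ ξ u s) (rPd κ ρ ξ u s) u :=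
  (hasDerivAt_fCX κ ρ ξ u s).add (((hasDerivAt_rY κ ρ ξ u s).div_const 2).mul
    (hasDerivAt_fSX κ ρ ξ u s))

lemma hasDerivAt_rB (κ ρ ξ u s : ℝ) (h : rP κ ρ ξ u s ≠ 0) :
    HasDerivAt (fun u => rB κ ρ ξ u s) (rBd κ ρ ξ u s) u := by
  have h0 : HasDerivAt (fun u : ℝ => (u ^ 2 - u * s) / 2) ((2 * u - s) / 2) u := by
    simpa using (((hasDerivAt_id u).pow 2).sub ((hasDerivAt_id u).mul_const s)).div_const 2
  exact (h0.mul (hasDerivAt_fSX κ ρ ξ u s)).div (hasDerivAt_rP κ ρ ξ u s) h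

lemma hasDerivAt_rA (κ θ ρ ξ u s : ℝ) (h : rP κ ρ ξ u s ≠ 0) :
    HasDerivAt (fun u => rA κ θ ρ ξ u s) (rAd κ θ ρ ξ u s) u :=
  ((hasDerivAt_rY κ ρ ξ u s).sub (((hasDerivAt_rP κ ρ ξ u s).log h).const_mul 2)).const_mul _

/-! ### Expansions as `s = h^2 → 0` along a bounded path -/

@[fun_prop]
lemma bdd_rx {u : ℝ → ℝ} (hu : Bdd u) (κ ρ ξ : ℝ) :
    Bdd (fun τ => rx κ ρ ξ (u τ) (hh τ ^ 2)) := by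
  unfold rx; fun_prop

@[fun_prop]
lemma bdd_rxd {u : ℝ → ℝ} (hu : Bdd u) (κ ρ ξ : ℝ) :
    Bdd (fun τ => rxd κ ρ ξ (u τ) (hh τ ^ 2)) := by
  unfold rxd; fun_prop

@[fun_prop]
lemma bdd_rX {u : ℝ → ℝ} (hu : Bdd u) (κ ρ ξ : ℝ) :
    Bdd (fun τ => rX κ ρ ξ (u τ) (hh τ ^ 2)) := by
  have := bdd_rx hu κ ρ ξ
  unfold rX; fun_prop

@[fun_prop]
lemma bdd_dfC {u : ℝ → ℝ} (hu : Bdd u) (κ ρ ξ : ℝ) :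
    Bdd (fun τ => deriv fC (rX κ ρ ξ (u τ) (hh τ ^ 2))) :=
  Bdd.comp continuous_dfC (bdd_rX hu κ ρ ξ)

@[fun_prop]
lemma bdd_dfS {u : ℝ → ℝ} (hu : Bdd u) (κ ρ ξ : ℝ) :
    Bdd (fun τ => deriv fS (rX κ ρ ξ (u τ) (hh τ ^ 2))) :=
  Bdd.comp continuous_dfS (bdd_rX hu κ ρ ξ)

lemma expand_S {u : ℝ → ℝ} (hu : Bdd u) (κ ρ ξ : ℝ) :
    ∃ σ : ℝ → ℝ, Bdd σ ∧ ∀ τ, fS (rX κ ρ ξ (u τ) (hh τ ^ 2)) = 1 + (hh τ ^ 2) ^ 2 * σ τ := by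
  have h1 := bdd_rx hu κ ρ ξ
  have h2 := Bdd.comp
    (continuous_dslope_zero fS (contDiff_fS.differentiable (by norm_num))) (bdd_rX hu κ ρ ξ)
  refine ⟨_, h1.mul h2, fun τ => ?_⟩
  conv_lhs => rw [fS_expand]
  simp only [rX]; ring

lemma expand_C {u : ℝ → ℝ} (hu : Bdd u) (κ ρ ξ : ℝ) :
    ∃ σ : ℝ → ℝ, Bdd σ ∧ ∀ τ, fC (rX κ ρ ξ (u τ) (hh τ ^ 2)) = 1 + (hh τ ^ 2) ^ 2 * σ τ := by
  have h1 := bdd_rx hu κ ρ ξ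
  have h2 := Bdd.comp
    (continuous_dslope_zero fC (contDiff_fC.differentiable (by norm_num))) (bdd_rX hu κ ρ ξ)
  refine ⟨_, h1.mul h2, fun τ => ?_⟩
  conv_lhs => rw [fC_expand]
  simp only [rX]; ring

lemma expand_P {u : ℝ → ℝ} (hu : Bdd u) (κ ρ ξ : ℝ) :
    ∃ p : ℝ → ℝ, Bdd p ∧ ∀ τ, rP κ ρ ξ (u τ) (hh τ ^ 2) =
      1 - (hh τ ^ 2) * (ρ * ξ * u τ / 2) + (hh τ ^ 2) ^ 2 * p τ := by
  obtain ⟨σ, hσ, h1⟩ := expand_S hu κ ρ ξ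
  obtain ⟨χ, hχ, h2⟩ := expand_C hu κ ρ ξ
  refine ⟨fun τ => χ τ + κ / 2 + hh τ ^ 2 * (κ * hh τ ^ 2 - ρ * ξ * u τ) * σ τ / 2,
    by fun_prop, fun τ => ?_⟩
  rw [rP, h1, h2, rY]; ring

lemma P_ge {u : ℝ → ℝ} (hu : Bdd u) (κ ρ ξ : ℝ) :
    ∀ᶠ τ in 𝓝[>] (0 : ℝ), 1 / 2 ≤ rP κ ρ ξ (u τ) (hh τ ^ 2) := by
  obtain ⟨p, hp, h⟩ := expand_P hu κ ρ ξ
  have := Bdd.small (f := fun τ => -hh τ * (ρ * ξ * u τ / 2) + hh τ ^ 3 * p τ) (by fun_prop)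
    (1 / 2) (by norm_num)
  filter_upwards [this] with τ g
  rw [h]
  have := (abs_lt.1 g).1
  linarith [show hh τ * (-hh τ * (ρ * ξ * u τ / 2) + hh τ ^ 3 * p τ) =
    - (hh τ ^ 2) * (ρ * ξ * u τ / 2) + (hh τ ^ 2) ^ 2 * p τ by ring]

lemma X_lt {u : ℝ → ℝ} (hu : Bdd u) (κ ρ ξ : ℝ) :
    ∀ᶠ τ in 𝓝[>] (0 : ℝ), |rX κ ρ ξ (u τ) (hh τ ^ 2)| < 1 := by
  have h1 := bdd_rx hu κ ρ ξ
  have := Bdd.small (f := fun τ => hh τ ^ 3 * rx κ ρ ξ (u τ) (hh τ ^ 2)) (by fun_prop)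
    1 (by norm_num)
  filter_upwards [this] with τ g
  rwa [rX, show (hh τ ^ 2) ^ 2 * rx κ ρ ξ (u τ) (hh τ ^ 2) =
    hh τ * (hh τ ^ 3 * rx κ ρ ξ (u τ) (hh τ ^ 2)) by ring]

lemma invP_bdd {u : ℝ → ℝ} (hu : Bdd u) (κ ρ ξ : ℝ) :
    Bdd (fun τ => 1 / rP κ ρ ξ (u τ) (hh τ ^ 2)) := by
  refine Bdd.div (by fun_prop) (1 / 2) (by norm_num) ?_
  filter_upwards [P_ge hu κ ρ ξ] with τ h
  exact h.trans (le_abs_self _)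

lemma expand_invP {u : ℝ → ℝ} (hu : Bdd u) (κ ρ ξ : ℝ) :
    ∃ ω : ℝ → ℝ, Bdd ω ∧ ∀ᶠ τ in 𝓝[>] (0 : ℝ), 1 / rP κ ρ ξ (u τ) (hh τ ^ 2) =
      1 + (hh τ ^ 2) * (ρ * ξ * u τ / 2) + (hh τ ^ 2) ^ 2 * ω τ := by
  obtain ⟨p, hp, h⟩ := expand_P hu κ ρ ξ
  have hi := invP_bdd hu κ ρ ξ
  refine ⟨fun τ => ((ρ * ξ * u τ / 2) ^ 2 - p τ * (1 + (ρ * ξ * u τ / 2) * hh τ ^ 2)) *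
    (1 / rP κ ρ ξ (u τ) (hh τ ^ 2)), by fun_prop, ?_⟩
  filter_upwards [P_ge hu κ ρ ξ] with τ g
  have hne : rP κ ρ ξ (u τ) (hh τ ^ 2) ≠ 0 := by linarith
  have hh' := h τ
  generalize rP κ ρ ξ (u τ) (hh τ ^ 2) = P at *
  field_simp
  rw [hh']
  ring

lemma expand_B {u : ℝ → ℝ} (hu : Bdd u) (κ ρ ξ : ℝ) :
    ∃ b : ℝ → ℝ, Bdd b ∧ ∀ᶠ τ in 𝓝[>] (0 : ℝ), rB κ ρ ξ (u τ) (hh τ ^ 2) =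
      u τ ^ 2 / 2 + hh τ ^ 2 * B1hat ρ ξ (u τ) + hh τ ^ 4 * b τ := by
  obtain ⟨σ, hσ, hS⟩ := expand_S hu κ ρ ξ
  obtain ⟨ω, hω, hQ⟩ := expand_invP hu κ ρ ξ
  have hi := invP_bdd hu κ ρ ξ
  refine ⟨fun τ => (u τ ^ 2 - u τ * hh τ ^ 2) / 2 * σ τ * (1 / rP κ ρ ξ (u τ) (hh τ ^ 2)) +
    (u τ ^ 2 - u τ * hh τ ^ 2) / 2 * ω τ - u τ * (ρ * ξ * u τ / 2) / 2, by fun_prop, ?_⟩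
  filter_upwards [hQ] with τ g
  rw [rB, hS, div_eq_mul_one_div _ (rP κ ρ ξ (u τ) (hh τ ^ 2)), B1hat]
  generalize 1 / rP κ ρ ξ (u τ) (hh τ ^ 2) = Q at *
  linear_combination (u τ ^ 2 - u τ * hh τ ^ 2) / 2 * g

lemma expand_Pd {u : ℝ → ℝ} (hu : Bdd u) (κ ρ ξ : ℝ) :
    ∃ p : ℝ → ℝ, Bdd p ∧ ∀ τ, rPd κ ρ ξ (u τ) (hh τ ^ 2) =
      -(hh τ ^ 2 * (ρ * ξ)) / 2 + hh τ ^ 4 * p τ := by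
  obtain ⟨σ, hσ, hS⟩ := expand_S hu κ ρ ξ
  have h1 := Bdd.comp continuous_dfC (bdd_rX hu κ ρ ξ)
  have h2 := Bdd.comp continuous_dfS (bdd_rX hu κ ρ ξ)
  have h3 := bdd_rxd hu κ ρ ξ
  have h4 : Bdd (fun τ => rY κ ρ ξ (u τ) (hh τ ^ 2)) := by unfold rY; fun_prop
  refine ⟨fun τ => deriv fC (rX κ ρ ξ (u τ) (hh τ ^ 2)) * rxd κ ρ ξ (u τ) (hh τ ^ 2) +
    rY κ ρ ξ (u τ) (hh τ ^ 2) / 2 * (deriv fS (rX κ ρ ξ (u τ) (hh τ ^ 2)) *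
      rxd κ ρ ξ (u τ) (hh τ ^ 2)) - hh τ ^ 2 * (ρ * ξ) / 2 * σ τ, by fun_prop, fun τ => ?_⟩
  rw [rPd, hS]
  ring

lemma expand_Nd {u : ℝ → ℝ} (hu : Bdd u) (κ ρ ξ : ℝ) :
    ∃ p : ℝ → ℝ, Bdd p ∧ ∀ τ, rNd κ ρ ξ (u τ) (hh τ ^ 2) =
      u τ - hh τ ^ 2 / 2 + hh τ ^ 4 * p τ := by
  obtain ⟨σ, hσ, hS⟩ := expand_S hu κ ρ ξ
  have h2 := Bdd.comp continuous_dfS (bdd_rX hu κ ρ ξ)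
  have h3 := bdd_rxd hu κ ρ ξ
  refine ⟨fun τ => (2 * u τ - hh τ ^ 2) / 2 * σ τ + (u τ ^ 2 - u τ * hh τ ^ 2) / 2 *
    (deriv fS (rX κ ρ ξ (u τ) (hh τ ^ 2)) * rxd κ ρ ξ (u τ) (hh τ ^ 2)), by fun_prop, fun τ => ?_⟩
  rw [rNd, hS]
  ring

lemma expand_Bd {u : ℝ → ℝ} (hu : Bdd u) (κ ρ ξ : ℝ) :
    ∃ b : ℝ → ℝ, Bdd b ∧ ∀ᶠ τ in 𝓝[>] (0 : ℝ), rBd κ ρ ξ (u τ) (hh τ ^ 2) =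
      u τ + hh τ ^ 2 * B1hat' ρ ξ (u τ) + hh τ ^ 4 * b τ := by
  obtain ⟨σ, hσ, hS⟩ := expand_S hu κ ρ ξ
  obtain ⟨ω, hω, hQ⟩ := expand_invP hu κ ρ ξ
  obtain ⟨p, hp, hPd⟩ := expand_Pd hu κ ρ ξ
  obtain ⟨ν, hν, hNd⟩ := expand_Nd hu κ ρ ξ
  have hi := invP_bdd hu κ ρ ξ
  set Q : ℝ → ℝ := fun τ => 1 / rP κ ρ ξ (u τ) (hh τ ^ 2) with hQdef
  refine ⟨fun τ => ν τ * Q τ + (u τ - hh τ ^ 2 / 2) * ω τ - (ρ * ξ * u τ / 2) / 2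
    - (u τ ^ 2 - u τ * hh τ ^ 2) / 2 * p τ * Q τ ^ 2
    - (u τ ^ 2 - u τ * hh τ ^ 2) / 2 * σ τ * (-(hh τ ^ 2 * (ρ * ξ)) / 2 + hh τ ^ 4 * p τ) * Q τ ^ 2
    + ρ * ξ / 2 * (u τ ^ 2 * ((ρ * ξ * u τ / 2 + hh τ ^ 2 * ω τ) * (Q τ + 1)) / 2
      - u τ * Q τ ^ 2 / 2), by fun_prop, ?_⟩
  filter_upwards [hQ, P_ge hu κ ρ ξ] with τ g g2
  have hne : rP κ ρ ξ (u τ) (hh τ ^ 2) ≠ 0 := by linarith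
  have h5 : rBd κ ρ ξ (u τ) (hh τ ^ 2) = rNd κ ρ ξ (u τ) (hh τ ^ 2) * Q τ -
      (u τ ^ 2 - u τ * hh τ ^ 2) / 2 * fS (rX κ ρ ξ (u τ) (hh τ ^ 2)) *
        rPd κ ρ ξ (u τ) (hh τ ^ 2) * Q τ ^ 2 := by
    rw [rBd]; simp only [hQdef]; field_simp
  rw [h5, hS, hNd, hPd, B1hat']
  have g' : Q τ = 1 + (hh τ ^ 2) * (ρ * ξ * u τ / 2) + (hh τ ^ 2) ^ 2 * ω τ := g
  linear_combination (u τ - hh τ ^ 2 / 2 + hh τ ^ 2 * (ρ * ξ) * u τ ^ 2 / 4 * (Q τ + 1)) * g'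

lemma expand_Ad {u : ℝ → ℝ} (hu : Bdd u) (κ θ ρ ξ : ℝ) :
    ∃ b : ℝ → ℝ, Bdd b ∧ ∀ τ, rAd κ θ ρ ξ (u τ) (hh τ ^ 2) = hh τ ^ 2 * b τ := by
  obtain ⟨p, hp, hPd⟩ := expand_Pd hu κ ρ ξ
  have hi := invP_bdd hu κ ρ ξ
  refine ⟨fun τ => κ * θ / ξ ^ 2 * (-(ρ * ξ) - 2 * ((-(ρ * ξ) / 2 + hh τ ^ 2 * p τ) *
    (1 / rP κ ρ ξ (u τ) (hh τ ^ 2)))), by fun_prop, fun τ => ?_⟩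
  rw [rAd, hPd]; ring


/-! ### The complex formulas agree with the real closed forms away from the junk points -/

lemma hestD_sq (κ ρ ξ : ℝ) (w : ℂ) : hestD κ ρ ξ w ^ 2 =
    ((κ : ℂ) - (ρ : ℂ) * (ξ : ℂ) * w) ^ 2 + w * (1 - w) * (ξ : ℂ) ^ 2 := by
  unfold hestD
  have := Complex.cpow_nat_inv_pow
    (((κ : ℂ) - (ρ : ℂ) * (ξ : ℂ) * w) ^ 2 + w * (1 - w) * (ξ : ℂ) ^ 2) (n := 2) (by norm_num)
  simpa using this

lemma exact_forms (κ θ ρ ξ u s τ : ℝ) (hξ : 0 < ξ) (hs : 0 < s) (hsτ : s ^ 2 = τ)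
    (hu0 : u ≠ 0) (hus : u ≠ s) (hX0 : rX κ ρ ξ u s ≠ 0) (hX1 : |rX κ ρ ξ u s| < 1)
    (hP : 0 < rP κ ρ ξ u s) :
    hestB κ ρ ξ ((u : ℂ) / (s : ℂ)) τ = (rB κ ρ ξ u s : ℂ) ∧
    hestA κ θ ρ ξ ((u : ℂ) / (s : ℂ)) τ = (rA κ θ ρ ξ u s : ℂ) := by
  have hsC : (s : ℂ) ≠ 0 := by exact_mod_cast hs.ne'
  have hξC : (ξ : ℂ) ≠ 0 := by exact_mod_cast hξ.ne'
  have huC : (u : ℂ) ≠ 0 := by exact_mod_cast hu0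
  have husC : (s : ℂ) - (u : ℂ) ≠ 0 := by
    intro h; apply hus; have : (s : ℂ) = u := by linear_combination h
    exact_mod_cast this.symm
  have hPC : (rP κ ρ ξ u s : ℂ) ≠ 0 := by exact_mod_cast hP.ne'
  have hτC : (τ : ℂ) = (s : ℂ) ^ 2 := by rw [← hsτ]; push_cast; rfl
  set w : ℂ := (u : ℂ) / (s : ℂ) with hw
  have hws : w * s = u := by rw [hw]; field_simp
  have hD2 := hestD_sq κ ρ ξ w
  unfold hestB hestA hestGamma
  set D := hestD κ ρ ξ w with hD
  set c : ℂ := (κ : ℂ) - (ρ : ℂ) * (ξ : ℂ) * w with hc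
  set z : ℂ := D * τ / 2 with hz
  have hz2 : z ^ 2 = ((rX κ ρ ξ u s : ℝ) : ℂ) := by
    rw [hz, rX, rx]
    push_cast
    rw [div_pow, mul_pow, hD2, hτC, ← hws, hc]
    ring
  have hz0 : z ≠ 0 := by
    intro h0; rw [h0] at hz2; apply hX0; exact_mod_cast (by simpa using hz2.symm)
  have hD0 : D ≠ 0 := by
    intro h0; apply hz0; rw [hz, h0]; simp
  have hcD : c + D ≠ 0 := by
    intro h0
    have h1 : w * (1 - w) * (ξ : ℂ) ^ 2 = 0 := by linear_combination (-(c - D)) * h0 - hD2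
    have h2 : (u : ℂ) * (s - u) * (ξ : ℂ) ^ 2 = 0 := by
      rw [← hws]; linear_combination s ^ 2 * h1
    simp [huC, husC, hξC] at h2
  have hch := cosh_eq_fC z _ hz2
  have hsh := sinh_eq_fS z _ hz2
  set E := Complex.exp (-z) with hE
  have hE0 : E ≠ 0 := Complex.exp_ne_zero _
  have hEch : 1 + E ^ 2 = 2 * E * (fC (rX κ ρ ξ u s) : ℂ) := by
    rw [← hch, Complex.cosh, ← hE]
    have : Complex.exp z * E = 1 := by rw [hE, ← Complex.exp_add]; simp
    linear_combination (-1) * this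
  have hEsh : 1 - E ^ 2 = 2 * E * (z * (fS (rX κ ρ ξ u s) : ℂ)) := by
    rw [← hsh, Complex.sinh, ← hE]
    have : Complex.exp z * E = 1 := by rw [hE, ← Complex.exp_add]; simp
    linear_combination (-1) * this
  have hEE : Complex.exp (-D * τ) = E ^ 2 := by
    rw [hE, ← Complex.exp_nat_mul]; congr 1; rw [hz]; push_cast; ring
  have hPd : ((rP κ ρ ξ u s : ℝ) : ℂ) = (fC (rX κ ρ ξ u s) : ℂ) +
      c * τ / 2 * (fS (rX κ ρ ξ u s) : ℂ) := by
    rw [rP, rY]; push_cast; rw [hτC, hc, ← hws]; ring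
  have hden : 1 - (c - D) / (c + D) * E ^ 2 = 2 * E * D * (rP κ ρ ξ u s : ℂ) / (c + D) := by
    rw [hPd]; field_simp
    rw [hz] at hEsh
    linear_combination c * hEsh + D * hEch
  have hden1 : 1 - (c - D) / (c + D) = 2 * D / (c + D) := by
    field_simp; ring
  rw [hEE, hden, hden1]
  constructor
  · rw [hEsh, rB]
    push_cast
    have : (c - D) * (c + D) = - (w * (1 - w) * (ξ : ℂ) ^ 2) := by linear_combination -hD2
    have h3 : (c - D) / (ξ : ℂ) ^ 2 * (2 * E * (z * (fS (rX κ ρ ξ u s) : ℂ)) /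
        (2 * E * D * (rP κ ρ ξ u s : ℂ) / (c + D))) =
        ((c - D) * (c + D)) / (ξ : ℂ) ^ 2 * (τ / 2 * (fS (rX κ ρ ξ u s) : ℂ)) / (rP κ ρ ξ u s : ℂ) := by
      rw [hz]; field_simp
    rw [h3, this, hτC]
    congr 1
    rw [← hws]
    field_simp
    ring
  · have hr : 2 * E * D * (rP κ ρ ξ u s : ℂ) / (c + D) / (2 * D / (c + D)) =
        (rP κ ρ ξ u s : ℂ) * E := by field_simp
    have hzn : ‖z‖ < 1 := by
      have : ‖z‖ ^ 2 = |rX κ ρ ξ u s| := by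
        rw [← norm_pow, hz2, Complex.norm_real, Real.norm_eq_abs]
      rw [← this] at hX1
      by_contra hcon
      push Not at hcon
      nlinarith
    have him : |z.im| < 1 := (Complex.abs_im_le_norm z).trans_lt hzn
    have hlog : Complex.log E = -z := by
      rw [hE]
      apply Complex.log_exp
      · simp only [Complex.neg_im]; have := (abs_lt.1 him).2; linarith [Real.pi_gt_three]
      · simp only [Complex.neg_im]; have := (abs_lt.1 him).1; linarith [Real.pi_gt_three]
    rw [hr, Complex.log_ofReal_mul hP hE0, hlog, rA, rY]
    push_cast
    rw [hz, hτC, hc, ← hws]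
    ring

/-- the points where the complex formula is legitimate -/
def Good (κ ρ ξ u s : ℝ) : Prop :=
  u ≠ 0 ∧ u ≠ s ∧ rX κ ρ ξ u s ≠ 0 ∧ |rX κ ρ ξ u s| < 1 ∧ 0 < rP κ ρ ξ u s

def rE (β κ ρ ξ u s : ℝ) : ℝ := 1 - 2 * β * rB κ ρ ξ u s

lemma lambda_good (κ θ ξ v ρ t τ u : ℝ) (hξ : 0 < ξ) (hτ : 0 < τ)
    (hg : Good κ ρ ξ u (Real.sqrt τ)) :
    hestLambda κ θ ξ v ρ t τ u = ((Real.sqrt τ : ℝ) : ℂ) *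
      (((rA κ θ ρ ξ u (Real.sqrt τ) + rB κ ρ ξ u (Real.sqrt τ) * v * Real.exp (-(κ * t)) /
        rE (betaT κ ξ t) κ ρ ξ u (Real.sqrt τ) : ℝ) : ℂ) -
      ((2 * κ * θ / ξ ^ 2 : ℝ) : ℂ) *
        Complex.log ((rE (betaT κ ξ t) κ ρ ξ u (Real.sqrt τ) : ℝ) : ℂ)) := by
  obtain ⟨h1, h2, h3, h4, h5⟩ := hg
  obtain ⟨hB, hA⟩ := exact_forms κ θ ρ ξ u (Real.sqrt τ) τ hξ (Real.sqrt_pos.2 hτ)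
    (Real.sq_sqrt hτ.le) h1 h2 h3 h4 h5
  rw [hestLambda, hestLambdaC, hestG, hA, hB, rE]
  push_cast
  ring

lemma lambda_im_good (κ θ ξ v ρ t τ u : ℝ) (hξ : 0 < ξ) (hτ : 0 < τ)
    (hg : Good κ ρ ξ u (Real.sqrt τ)) :
    (hestLambda κ θ ξ v ρ t τ u).im = - (Real.sqrt τ * (2 * κ * θ / ξ ^ 2) *
      Complex.arg ((rE (betaT κ ξ t) κ ρ ξ u (Real.sqrt τ) : ℝ) : ℂ)) := by
  rw [lambda_good κ θ ξ v ρ t τ u hξ hτ hg, Complex.im_ofReal_mul, Complex.sub_im,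
    Complex.ofReal_im, Complex.im_ofReal_mul, Complex.log_im]
  ring

lemma lambda_im_ne (κ θ ξ v ρ t τ u : ℝ) (hκ : 0 < κ) (hθ : 0 < θ) (hξ : 0 < ξ) (hτ : 0 < τ)
    (hg : Good κ ρ ξ u (Real.sqrt τ)) (hE : rE (betaT κ ξ t) κ ρ ξ u (Real.sqrt τ) < 0) :
    (hestLambda κ θ ξ v ρ t τ u).im ≠ 0 := by
  rw [lambda_im_good κ θ ξ v ρ t τ u hξ hτ hg, Complex.arg_ofReal_of_neg hE]
  have := Real.sqrt_pos.2 hτ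
  have := Real.pi_pos
  have : 0 < Real.sqrt τ * (2 * κ * θ / ξ ^ 2) * Real.pi := by positivity
  linarith

lemma rX_ne_nhds (κ ρ ξ u s : ℝ) (hξ : 0 < ξ) (hρ : ρ ∈ Set.Ioo (-1 : ℝ) 1) (hs : 0 < s) :
    ∀ᶠ x in 𝓝[≠] u, rX κ ρ ξ x s ≠ 0 := by
  let p : Polynomial ℝ := Polynomial.C ((ρ ^ 2 - 1) * ξ ^ 2) * Polynomial.X ^ 2 +
    Polynomial.C (s * (ξ ^ 2 - 2 * κ * ρ * ξ)) * Polynomial.X + Polynomial.C (κ ^ 2 * s ^ 2)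
  have hlead : (ρ ^ 2 - 1) * ξ ^ 2 ≠ 0 := by
    apply mul_ne_zero
    · have : ρ ^ 2 < 1 := by have := hρ.1; have := hρ.2; nlinarith
      linarith
    · positivity
  have hp : p ≠ 0 := by
    intro h0
    have := Polynomial.natDegree_quadratic (b := s * (ξ ^ 2 - 2 * κ * ρ * ξ)) (c := κ ^ 2 * s ^ 2)
      hlead
    change p.natDegree = 2 at this
    rw [h0] at this; simp at this
  have hfin := Polynomial.finite_setOfPred_isRoot hp
  have : ∀ᶠ x in 𝓝[≠] u, x ∉ {x | p.IsRoot x} := by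
    have hcl : ({x | p.IsRoot x} \ {u})ᶜ ∈ 𝓝 u :=
      (hfin.subset Set.sdiff_subset).isClosed.isOpen_compl.mem_nhds (by simp)
    filter_upwards [nhdsWithin_le_nhds hcl, self_mem_nhdsWithin] with x h1 h2 h3
    exact h1 ⟨h3, h2⟩
  filter_upwards [this] with x hx h0
  apply hx
  have h1 : rx κ ρ ξ x s = 0 := by
    rcases mul_eq_zero.1 h0 with h | h
    · exact absurd h (by positivity)
    · exact h
  simp only [Set.mem_ofPred_eq, Polynomial.IsRoot, p]
  simp only [rx] at h1
  simp
  linarith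

lemma good_nhds (κ ρ ξ u s : ℝ) (hξ : 0 < ξ) (hρ : ρ ∈ Set.Ioo (-1 : ℝ) 1) (hs : 0 < s)
    (hX : |rX κ ρ ξ u s| < 1) (hP : 0 < rP κ ρ ξ u s) :
    ∀ᶠ x in 𝓝[≠] u, Good κ ρ ξ x s := by
  have h1 : ∀ᶠ x in 𝓝[≠] u, x ≠ 0 := by
    by_cases h : u = 0
    · subst h; exact self_mem_nhdsWithin
    · exact nhdsWithin_le_nhds (isOpen_ne.mem_nhds h)
  have h2 : ∀ᶠ x in 𝓝[≠] u, x ≠ s := by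
    by_cases h : u = s
    · subst h; exact self_mem_nhdsWithin
    · exact nhdsWithin_le_nhds (isOpen_ne.mem_nhds h)
  have h3 : ∀ᶠ x in 𝓝[≠] u, |rX κ ρ ξ x s| < 1 :=
    nhdsWithin_le_nhds ((hasDerivAt_rX κ ρ ξ u s).continuousAt.abs.eventually_lt
      continuousAt_const hX)
  have h4 : ∀ᶠ x in 𝓝[≠] u, 0 < rP κ ρ ξ x s :=
    nhdsWithin_le_nhds (continuousAt_const.eventually_lt
      (hasDerivAt_rP κ ρ ξ u s).continuousAt hP)
  filter_upwards [h1, h2, h3, h4, rX_ne_nhds κ ρ ξ u s hξ hρ hs] with x g1 g2 g3 g4 g5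
  exact ⟨g1, g2, g5, g3, g4⟩

lemma deriv_eq_point (κ θ ξ v ρ t τ u k : ℝ) (hκ : 0 < κ) (hθ : 0 < θ) (hξ : 0 < ξ)
    (hρ : ρ ∈ Set.Ioo (-1 : ℝ) 1) (hτ : 0 < τ) (hk : k ≠ 0) (hβ : 0 < betaT κ ξ t)
    (hX : |rX κ ρ ξ u (Real.sqrt τ)| < 1) (hP : 0 < rP κ ρ ξ u (Real.sqrt τ))
    (hintr : u ∈ interior {u : ℝ | (hestLambda κ θ ξ v ρ t τ u).im = 0})
    (hder : deriv (hestLambda κ θ ξ v ρ t τ) u = (k : ℂ))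
    (hnd : rE (betaT κ ξ t) κ ρ ξ u (Real.sqrt τ) = 0 → rBd κ ρ ξ u (Real.sqrt τ) ≠ 0) :
    0 < rE (betaT κ ξ t) κ ρ ξ u (Real.sqrt τ) ∧
    k = Real.sqrt τ * (rAd κ θ ρ ξ u (Real.sqrt τ) +
      rBd κ ρ ξ u (Real.sqrt τ) * (v * Real.exp (-(κ * t))) /
        rE (betaT κ ξ t) κ ρ ξ u (Real.sqrt τ) ^ 2 +
      (4 * κ * θ * betaT κ ξ t / ξ ^ 2) * rBd κ ρ ξ u (Real.sqrt τ) /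
        rE (betaT κ ξ t) κ ρ ξ u (Real.sqrt τ)) := by
  set s := Real.sqrt τ with hs
  set β := betaT κ ξ t with hβd
  have hs0 : 0 < s := Real.sqrt_pos.2 hτ
  have hgood := good_nhds κ ρ ξ u s hξ hρ hs0 hX hP
  have hBder := hasDerivAt_rB κ ρ ξ u s hP.ne'
  have hEder : HasDerivAt (fun x => rE β κ ρ ξ x s) (-(2 * β * rBd κ ρ ξ u s)) u := by
    exact (hBder.const_mul (2 * β)).const_sub 1
  -- E ≥ 0 near u
  have hEn : ∀ᶠ x in 𝓝[≠] u, 0 ≤ rE β κ ρ ξ x s := by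
    filter_upwards [hgood, nhdsWithin_le_nhds (mem_interior_iff_mem_nhds.1 hintr)] with x g1 g2
    by_contra hcon
    push Not at hcon
    exact lambda_im_ne κ θ ξ v ρ t τ x hκ hθ hξ hτ g1 hcon g2
  have hE0 : 0 ≤ rE β κ ρ ξ u s :=
    ge_of_tendsto (hEder.continuousAt.tendsto.mono_left nhdsWithin_le_nhds) hEn
  have hEpos : 0 < rE β κ ρ ξ u s := by
    rcases hE0.lt_or_eq with h | h
    · exact h
    · exfalso
      have hmin : IsLocalMin (fun x => rE β κ ρ ξ x s) u := by
        rw [eventually_nhdsWithin_iff] at hEn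
        filter_upwards [hEn] with x hx
        by_cases hxu : x = u
        · rw [hxu]
        · rw [← h]; exact hx hxu
      have h0 := hmin.hasDerivAt_eq_zero hEder
      apply hnd h.symm
      have : 2 * β * rBd κ ρ ξ u s = 0 := by linarith
      simpa [hβ.ne'] using this
  refine ⟨hEpos, ?_⟩
  set F : ℝ → ℝ := fun x => s * (rA κ θ ρ ξ x s + rB κ ρ ξ x s * v * Real.exp (-(κ * t)) /
    rE β κ ρ ξ x s - (2 * κ * θ / ξ ^ 2) * Real.log (rE β κ ρ ξ x s)) with hF
  have hFL : ∀ᶠ x in 𝓝[≠] u, hestLambda κ θ ξ v ρ t τ x = (F x : ℂ) := by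
    have hp : ∀ᶠ x in 𝓝[≠] u, 0 < rE β κ ρ ξ x s :=
      nhdsWithin_le_nhds (continuousAt_const.eventually_lt hEder.continuousAt hEpos)
    filter_upwards [hgood, hp] with x g1 g2
    rw [lambda_good κ θ ξ v ρ t τ x hξ hτ g1, ← Complex.ofReal_log g2.le, hF]
    push_cast
    rfl
  have hFder : HasDerivAt F (s * (rAd κ θ ρ ξ u s +
      rBd κ ρ ξ u s * (v * Real.exp (-(κ * t))) / rE β κ ρ ξ u s ^ 2 +
      (4 * κ * θ * β / ξ ^ 2) * rBd κ ρ ξ u s / rE β κ ρ ξ u s)) u := by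
    have h := (((hasDerivAt_rA κ θ ρ ξ u s hP.ne').add
      (((hBder.mul_const v).mul_const (Real.exp (-(κ * t)))).div hEder hEpos.ne')).sub
      ((hEder.log hEpos.ne').const_mul (2 * κ * θ / ξ ^ 2))).const_mul s
    refine h.congr_deriv ?_
    have h1 : rB κ ρ ξ u s * (2 * β) = 1 - rE β κ ρ ξ u s := by rw [rE]; ring
    have h2 := hEpos.ne'
    field_simp
    linear_combination ξ ^ 2 * rBd κ ρ ξ u s * v * Real.exp (-(κ * t)) * h1
  have hdiff : DifferentiableAt ℝ (hestLambda κ θ ξ v ρ t τ) u := by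
    by_contra hcon
    rw [deriv_zero_of_not_differentiableAt hcon] at hder
    exact hk (by exact_mod_cast hder.symm)
  have hval : hestLambda κ θ ξ v ρ t τ u = (F u : ℂ) := by
    have t1 : Tendsto (hestLambda κ θ ξ v ρ t τ) (𝓝[≠] u) (𝓝 (hestLambda κ θ ξ v ρ t τ u)) :=
      hdiff.continuousAt.tendsto.mono_left nhdsWithin_le_nhds
    have t2 : Tendsto (fun x => (F x : ℂ)) (𝓝[≠] u) (𝓝 (F u : ℂ)) :=
      (Complex.continuous_ofReal.continuousAt.comp hFder.continuousAt).tendsto.mono_left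
        nhdsWithin_le_nhds
    exact tendsto_nhds_unique (t1.congr' hFL) t2
  have hev : hestLambda κ θ ξ v ρ t τ =ᶠ[𝓝 u] fun x => (F x : ℂ) := by
    rw [eventually_nhdsWithin_iff] at hFL
    filter_upwards [hFL] with x hx
    by_cases hxu : x = u
    · rw [hxu]; exact hval
    · exact hx hxu
  rw [hev.deriv_eq, hFder.ofReal_comp.deriv] at hder
  exact_mod_cast hder.symm


/-! ### Assembling the pieces -/

lemma hh_sq {τ : ℝ} (hτ : 0 < τ) : hh τ ^ 2 = Real.sqrt τ := Real.sq_sqrt (Real.sqrt_nonneg _)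

lemma betaT_pos (κ ξ t : ℝ) (hκ : 0 < κ) (hξ : 0 < ξ) (ht : 0 < t) : 0 < betaT κ ξ t := by
  unfold betaT
  have : Real.exp (-(κ * t)) < 1 := by
    rw [Real.exp_lt_one_iff]; have := mul_pos hκ ht; linarith
  have h2 : 0 < 1 - Real.exp (-(κ * t)) := by linarith
  positivity

lemma good_path (κ ρ ξ β : ℝ) (hξ : 0 < ξ) (hρ : ρ ∈ Set.Ioo (-1 : ℝ) 1) (hβ : 0 < β)
    {u : ℝ → ℝ} (hu : Bdd u) (hlow : ∀ᶠ τ in 𝓝[>] (0 : ℝ), 1 / 2 ≤ β * u τ ^ 2) :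
    ∀ᶠ τ in 𝓝[>] (0 : ℝ), Good κ ρ ξ (u τ) (hh τ ^ 2) := by
  have hr : 0 < 1 - ρ ^ 2 := by have := hρ.1; have := hρ.2; nlinarith
  have s1 := Bdd.small (f := fun τ => β * hh τ ^ 3) (by fun_prop) (1 / 2) (by norm_num)
  have s2 := Bdd.small (f := fun τ => β * (hh τ *
    (κ ^ 2 * hh τ ^ 2 - 2 * κ * ρ * ξ * u τ + u τ * ξ ^ 2))) (by fun_prop)
    ((1 - ρ ^ 2) * ξ ^ 2 / 2) (by positivity)
  filter_upwards [s1, s2, hlow, P_ge hu κ ρ ξ, X_lt hu κ ρ ξ, hh_pos] with τ h1 h2 h3 h4 h5 h6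
  refine ⟨?_, ?_, ?_, h5, by linarith⟩
  · intro h0; rw [h0] at h3; norm_num at h3
  · intro h0; rw [h0] at h3
    have := (abs_lt.1 h1).2
    nlinarith
  · have h7 : rx κ ρ ξ (u τ) (hh τ ^ 2) < 0 := by
      have := (abs_lt.1 h2).2
      have h8 : (1 - ρ ^ 2) * ξ ^ 2 * (1 / 2) ≤ (1 - ρ ^ 2) * ξ ^ 2 * (β * u τ ^ 2) :=
        mul_le_mul_of_nonneg_left h3 (by positivity)
      have h9 : β * (4 * rx κ ρ ξ (u τ) (hh τ ^ 2)) < 0 := by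
        unfold rx
        nlinarith
      by_contra hcon
      push Not at hcon
      have : 0 ≤ β * (4 * rx κ ρ ξ (u τ) (hh τ ^ 2)) := by positivity
      linarith
    have : 0 < (hh τ ^ 2) ^ 2 := by positivity
    unfold rX
    exact mul_ne_zero this.ne' h7.ne

@[fun_prop]
lemma bdd_B1hat {u : ℝ → ℝ} (hu : Bdd u) (ρ ξ : ℝ) : Bdd (fun τ => B1hat ρ ξ (u τ)) := by
  unfold B1hat; fun_prop

@[fun_prop]
lemma bdd_B1hat' {u : ℝ → ℝ} (hu : Bdd u) (ρ ξ : ℝ) : Bdd (fun τ => B1hat' ρ ξ (u τ)) := by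
  unfold B1hat'; fun_prop

lemma im_ne_const (κ θ ξ v ρ t : ℝ) (hκ : 0 < κ) (hθ : 0 < θ) (hξ : 0 < ξ)
    (hρ : ρ ∈ Set.Ioo (-1 : ℝ) 1) (ht : 0 < t) (R : ℝ) (hR : betaT κ ξ t * R ^ 2 = 4) :
    ∀ᶠ τ in 𝓝[>] (0 : ℝ), (hestLambda κ θ ξ v ρ t τ R).im ≠ 0 := by
  have hβ := betaT_pos κ ξ t hκ hξ ht
  have hu : Bdd (fun _ : ℝ => R) := Bdd.const R
  obtain ⟨b, hb, hB⟩ := expand_B hu κ ρ ξ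
  have hg := good_path κ ρ ξ _ hξ hρ hβ hu (Eventually.of_forall fun τ => by rw [hR]; norm_num)
  have hs := Bdd.small (f := fun τ => 2 * betaT κ ξ t * (hh τ * B1hat ρ ξ R + hh τ ^ 3 * b τ))
    (by fun_prop) 1 one_pos
  filter_upwards [hB, hg, hs, self_mem_nhdsWithin] with τ h1 h2 h3 h4
  have h4 : 0 < τ := h4
  rw [hh_sq h4] at h2
  refine lambda_im_ne κ θ ξ v ρ t τ R hκ hθ hξ h4 h2 ?_
  rw [← hh_sq h4, rE, h1]
  have := (abs_lt.1 h3).1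
  linarith

lemma ustar_bdd (κ θ ξ v ρ t : ℝ) (hκ : 0 < κ) (hθ : 0 < θ) (hξ : 0 < ξ)
    (hρ : ρ ∈ Set.Ioo (-1 : ℝ) 1) (ht : 0 < t) (ustar : ℝ → ℝ)
    (h : ∀ᶠ τ in 𝓝[>] (0 : ℝ), ustar τ ∈ hestDom κ θ ξ v ρ t τ) : Bdd ustar := by
  have hβ := betaT_pos κ ξ t hκ hξ ht
  set R := 2 / Real.sqrt (betaT κ ξ t) with hRd
  have hR0 : 0 < R := by have := Real.sqrt_pos.2 hβ; positivity
  have hR : betaT κ ξ t * R ^ 2 = 4 := by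
    rw [hRd, div_pow, Real.sq_sqrt hβ.le]; field_simp; norm_num
  have hR' : betaT κ ξ t * (-R) ^ 2 = 4 := by rw [neg_sq]; exact hR
  refine ⟨R, ?_⟩
  filter_upwards [h, im_ne_const κ θ ξ v ρ t hκ hθ hξ hρ ht R hR,
    im_ne_const κ θ ξ v ρ t hκ hθ hξ hρ ht (-R) hR'] with τ h1 h2 h3
  unfold hestDom at h1
  set F := interior {u : ℝ | (hestLambda κ θ ξ v ρ t τ u).im = 0} with hF
  have h0F : (0 : ℝ) ∈ F := by
    by_contra hcon
    rw [connectedComponentIn_eq_empty hcon] at h1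
    exact h1
  have h0 : (0 : ℝ) ∈ connectedComponentIn F 0 := mem_connectedComponentIn h0F
  have hoc : (connectedComponentIn F 0).OrdConnected :=
    isPreconnected_connectedComponentIn.ordConnected
  have hsub : connectedComponentIn F 0 ⊆ {u : ℝ | (hestLambda κ θ ξ v ρ t τ u).im = 0} :=
    (connectedComponentIn_subset _ _).trans interior_subset
  rw [abs_le]
  constructor
  · by_contra hcon
    push Not at hcon
    exact h3 (hsub (hoc.out h1 h0 ⟨hcon.le, by linarith⟩))
  · by_contra hcon
    push Not at hcon
    exact h2 (hsub (hoc.out h0 h1 ⟨hR0.le, hcon.le⟩))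

lemma coef_ids (κ θ ξ v ρ t k : ℝ) (hκ : 0 < κ) (hθ : 0 < θ) (hξ : 0 < ξ)
    (hv : 0 < v) (ht : 0 < t) (hk : k ≠ 0)
    (a0 e0 e1 e2 β m c : ℝ) (ha0 : a0 = coefA0 κ θ ξ v ρ t k) (he0 : e0 = coefE0 κ θ ξ v ρ t k)
    (he1 : e1 = coefE1 κ θ ξ v ρ t k) (he2 : e2 = coefE2 κ θ ξ v ρ t k)
    (hβ : β = betaT κ ξ t) (hm : m = v * Real.exp (-(κ * t)))
    (hc : c = 4 * κ * θ * β / ξ ^ 2) :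
    β * a0 ^ 2 = 1 ∧ 0 < k * a0 ∧ 0 < e0 ∧ k * e0 ^ 2 = a0 * m ∧
    2 * k * e1 = a0 * (c - m / 2) ∧
    k * (e1 ^ 2 + 2 * e0 * e2) = a0 * (m * (-e1 / 2 - e0 ^ 2 / 8 - β * B1hat ρ ξ a0)
      - c * e0 ^ 2 / 2 + c * e1) + m * B1hat' ρ ξ a0 := by
  have hβ0 : 0 < β := hβ ▸ betaT_pos κ ξ t hκ hξ ht
  obtain ⟨b, hb⟩ : ∃ b, b = β ^ ((1 : ℝ) / 4) := ⟨_, rfl⟩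
  obtain ⟨x, hx⟩ : ∃ x, x = Real.exp (-(κ * t) / 2) := ⟨_, rfl⟩
  obtain ⟨p, hp⟩ : ∃ p, p = Real.sqrt v := ⟨_, rfl⟩
  obtain ⟨q, hq⟩ : ∃ q, q = Real.sqrt |k| := ⟨_, rfl⟩
  have hb0 : 0 < b := hb ▸ Real.rpow_pos_of_pos hβ0 _
  have hx0 : 0 < x := hx ▸ Real.exp_pos _
  have hp0 : 0 < p := hp ▸ Real.sqrt_pos.2 hv
  have hq0 : 0 < q := hq ▸ Real.sqrt_pos.2 (abs_pos.2 hk)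
  have hb4 : β = b ^ 4 := by
    rw [hb, ← Real.rpow_natCast, ← Real.rpow_mul hβ0.le]; norm_num
  have hsb : Real.sqrt β = b ^ 2 := by
    rw [hb4, show b ^ 4 = (b ^ 2) ^ 2 by ring]; exact Real.sqrt_sq (by positivity)
  have hvp : v = p ^ 2 := by rw [hp, Real.sq_sqrt hv.le]
  have hkq : |k| = q ^ 2 := by rw [hq, Real.sq_sqrt (abs_nonneg _)]
  have hx2 : Real.exp (-(κ * t)) = x ^ 2 := by
    rw [hx, ← Real.exp_nat_mul]; congr 1; push_cast; ring
  have hx2i : Real.exp (κ * t) = 1 / x ^ 2 := by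
    rw [← hx2, Real.exp_neg]; simp
  obtain ⟨σ, hσ⟩ : ∃ σ, σ = sgn' k := ⟨_, rfl⟩
  have hσ2 : σ = 1 ∧ k = q ^ 2 ∨ σ = -1 ∧ k = - q ^ 2 := by
    rcases lt_or_gt_of_ne hk with h | h
    · right; rw [hσ, ← hkq, abs_of_neg h]; simp [sgn', not_le.2 h]
    · left; rw [hσ, ← hkq, abs_of_pos h]; simp [sgn', h.le]
  have A0 : coefA0 κ θ ξ v ρ t k = σ / b ^ 2 := by rw [coefA0, ← hβ, hsb, hσ]
  have A1 : coefA1 κ θ ξ v ρ t k = -(σ / b ^ 2) * p * x / (2 * q * b) := by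
    rw [coefA1, A0, ← hβ, ← hb, ← hp, ← hq, ← hx]
  have A2 : coefA2 κ θ ξ v ρ t k = -(κ * θ) / (k * ξ ^ 2) -
      B1hat ρ ξ (σ / b ^ 2) / (σ / b ^ 2) := by rw [coefA2, A0]
  have A3 := coefA3.eq_1 κ θ ξ v ρ t k
  rw [A1, A0, ← hβ, hsb, hkq, hx2i] at A3
  have E0 := coefE0.eq_1 κ θ ξ v ρ t k
  rw [A1, A0] at E0
  have E1 := coefE1.eq_1 κ θ ξ v ρ t k
  rw [coefR, A1, ← hβ, hsb, hkq] at E1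
  have E2 := coefE2.eq_1 κ θ ξ v ρ t k
  rw [A1, A2, A0, A3, ← hβ] at E2
  rw [E0] at he0
  rw [E1] at he1
  rw [E2] at he2
  rw [A0] at ha0
  rw [hx2] at hm
  clear E0 E1 E2 A0 A1 A2 A3 hx2 hx2i hkq hsb hσ hβ hb hx hp hq
  rcases hσ2 with ⟨rfl, hkk⟩ | ⟨rfl, hkk⟩
  · subst hkk hvp hb4 ha0 he0 he1 he2 hm hc
    refine ⟨by field_simp, by positivity, ?_, ?_, ?_, ?_⟩
    · have : 0 < p * x / (q * b) := by positivity
      convert this using 1; field_simp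
    · field_simp
    · field_simp; ring
    · simp only [B1hat, B1hat']
      field_simp; ring
  · subst hkk hvp hb4 ha0 he0 he1 he2 hm hc
    refine ⟨by field_simp, ?_, ?_, ?_, ?_, ?_⟩
    · have : 0 < q ^ 2 / b ^ 2 := by positivity
      convert this using 1; field_simp
    · have : 0 < p * x / (q * b) := by positivity
      convert this using 1; field_simp
    · field_simp
    · field_simp; ring
    · simp only [B1hat, B1hat']
      field_simp; ring

theorem stmt14 (κ θ ξ v ρ t : ℝ) (hκ : 0 < κ) (hθ : 0 < θ) (hξ : 0 < ξ)
    (hv : 0 < v) (hρ : ρ ∈ Set.Ioo (-1 : ℝ) 1) (ht : 0 < t)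
    (k : ℝ) (hk : k ≠ 0) (ustar : ℝ → ℝ)
    (hustar : ∀ᶠ τ in 𝓝[>] (0 : ℝ), ustar τ ∈ hestDom κ θ ξ v ρ t τ ∧
      deriv (hestLambda κ θ ξ v ρ t τ) (ustar τ) = (k : ℂ)) :
    (fun τ : ℝ =>
        (1 - 2 * (betaT κ ξ t : ℂ) *
            hestB κ ρ ξ ((ustar τ : ℝ) / ((Real.sqrt τ : ℝ) : ℂ)) τ) *
          ((τ ^ (-(1 : ℝ) / 4) : ℝ) : ℂ) -
        (((coefE0 κ θ ξ v ρ t k : ℝ) : ℂ) +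
          ((coefE1 κ θ ξ v ρ t k : ℝ) : ℂ) * ((τ ^ ((1 : ℝ) / 4) : ℝ) : ℂ) +
          ((coefE2 κ θ ξ v ρ t k : ℝ) : ℂ) * ((τ ^ ((1 : ℝ) / 2) : ℝ) : ℂ)))
      =O[𝓝[>] (0 : ℝ)] fun τ : ℝ => τ ^ ((3 : ℝ) / 4) := by

  have hβ := betaT_pos κ ξ t hκ hξ ht
  have hu : Bdd ustar := ustar_bdd κ θ ξ v ρ t hκ hθ hξ hρ ht ustar (hustar.mono fun τ h => h.1)
  obtain ⟨b, hb, hB⟩ := expand_B hu κ ρ ξ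
  obtain ⟨b', hb', hBd⟩ := expand_Bd hu κ ρ ξ
  obtain ⟨α, hα, hAd⟩ := expand_Ad hu κ θ ρ ξ
  obtain ⟨β, hβe⟩ : ∃ β, β = betaT κ ξ t := ⟨_, rfl⟩
  obtain ⟨m, hm⟩ : ∃ m, m = v * Real.exp (-(κ * t)) := ⟨_, rfl⟩
  obtain ⟨c, hc⟩ : ∃ c, c = 4 * κ * θ * β / ξ ^ 2 := ⟨_, rfl⟩
  rw [← hβe] at hβ
  have hm0 : 0 < m := by rw [hm]; have := Real.exp_pos (-(κ * t)); positivity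
  have hc0 : 0 ≤ c := by rw [hc]; positivity
  obtain ⟨I1, I2, I3, I4, I5, I6⟩ := coef_ids κ θ ξ v ρ t k hκ hθ hξ hv ht hk _ _ _ _ β m c
    rfl rfl rfl rfl hβe hm hc
  have hsm := Bdd.small (f := fun τ => -β * ustar τ * (hh τ * B1hat' ρ ξ (ustar τ) + hh τ ^ 3 * b' τ)
    + 2 * β * (hh τ * B1hat ρ ξ (ustar τ) + hh τ ^ 3 * b τ)) (by fun_prop) 1 one_pos
  have hpt : ∀ᶠ τ in 𝓝[>] (0 : ℝ), 0 < rE β κ ρ ξ (ustar τ) (hh τ ^ 2) ∧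
      k = hh τ ^ 2 * (rAd κ θ ρ ξ (ustar τ) (hh τ ^ 2) +
        rBd κ ρ ξ (ustar τ) (hh τ ^ 2) * m / rE β κ ρ ξ (ustar τ) (hh τ ^ 2) ^ 2 +
        c * rBd κ ρ ξ (ustar τ) (hh τ ^ 2) / rE β κ ρ ξ (ustar τ) (hh τ ^ 2)) := by
    filter_upwards [hustar, hB, hBd, hsm, P_ge hu κ ρ ξ, X_lt hu κ ρ ξ, self_mem_nhdsWithin]
      with τ g1 g2 g3 g4 g5 g6 g7
    have g7 : 0 < τ := g7
    have hnd : rE β κ ρ ξ (ustar τ) (hh τ ^ 2) = 0 → rBd κ ρ ξ (ustar τ) (hh τ ^ 2) ≠ 0 := by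
      intro n1 n2
      rw [rE, g2] at n1
      rw [g3] at n2
      have := (abs_lt.1 g4).2
      have h1 : hh τ * (-β * ustar τ * (hh τ * B1hat' ρ ξ (ustar τ) + hh τ ^ 3 * b' τ)
        + 2 * β * (hh τ * B1hat ρ ξ (ustar τ) + hh τ ^ 3 * b τ)) = 1 := by
        linear_combination (-1) * n1 - β * ustar τ * n2
      linarith
    rw [hh_sq g7] at g5 g6 hnd ⊢
    rw [hc, hm, hβe]
    rw [hβe] at hnd hβ
    exact deriv_eq_point κ θ ξ v ρ t τ (ustar τ) k hκ hθ hξ hρ g7 hk hβ g6 (by linarith)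
      (connectedComponentIn_subset _ _ g1.1) g1.2 hnd
  obtain ⟨e, he⟩ : ∃ e : ℝ → ℝ, ∀ τ, e τ = rE β κ ρ ξ (ustar τ) (hh τ ^ 2) / hh τ :=
    ⟨_, fun _ => rfl⟩
  obtain ⟨hlow, g, hg, hfin⟩ := core_asymp k β m c ρ ξ _ _ _ _ hk hβ hm0 hc0 I1 I2 I3 I4 I5 I6
    ustar e α b b' hu hα hb hb'
    (by filter_upwards [hpt, hh_pos] with τ g1 g2; rw [he]; exact div_pos g1.1 g2)
    (by
      filter_upwards [hB, hh_pos] with τ g1 g2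
      rw [he, rE, g1]; field_simp; ring)
    (by
      filter_upwards [hpt, hBd, hh_pos] with τ g1 g2 g3
      obtain ⟨g4, g5⟩ := g1
      rw [← g2]
      have hE : rE β κ ρ ξ (ustar τ) (hh τ ^ 2) = hh τ * e τ := by rw [he]; field_simp
      rw [hE] at g4 g5
      have he0 : e τ ≠ 0 := by
        intro h0; rw [h0] at g4; simp at g4
      rw [hAd] at g5
      have hh0 := g3.ne'
      field_simp at g5
      linear_combination g5)
  have hgood := good_path κ ρ ξ β hξ hρ hβ hu hlow
  obtain ⟨K, hK⟩ := hg
  refine IsBigO.of_bound K ?_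
  filter_upwards [hfin, hgood, hK, hh_pos, self_mem_nhdsWithin] with τ g1 g2 g3 g4 g5
  have g5 : 0 < τ := g5
  have r1 : τ ^ ((1 : ℝ) / 4) = hh τ := by
    rw [hh, Real.sqrt_eq_rpow, Real.sqrt_eq_rpow, ← Real.rpow_mul g5.le]; norm_num
  have r2 : τ ^ ((1 : ℝ) / 2) = hh τ ^ 2 := by
    rw [hh_sq g5, Real.sqrt_eq_rpow]
  have r3 : τ ^ ((3 : ℝ) / 4) = hh τ ^ 3 := by
    rw [← r1, ← Real.rpow_natCast, ← Real.rpow_mul g5.le]; norm_num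
  have r4 : τ ^ (-(1 : ℝ) / 4) = (hh τ)⁻¹ := by
    rw [← r1, ← Real.rpow_neg g5.le]; norm_num
  rw [hh_sq g5] at g2
  obtain ⟨q1, q2, q3, q4, q5⟩ := g2
  have hform := (exact_forms κ θ ρ ξ (ustar τ) (Real.sqrt τ) τ hξ (Real.sqrt_pos.2 g5)
    (Real.sq_sqrt g5.le) q1 q2 q3 q4 q5).1
  rw [hform, r1, r2, r3, r4, ← hβe]
  have hmain : (1 - 2 * (β : ℂ) * ((rB κ ρ ξ (ustar τ) (Real.sqrt τ) : ℝ) : ℂ)) *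
          (((hh τ)⁻¹ : ℝ) : ℂ) -
        (((coefE0 κ θ ξ v ρ t k : ℝ) : ℂ) +
          ((coefE1 κ θ ξ v ρ t k : ℝ) : ℂ) * ((hh τ : ℝ) : ℂ) +
          ((coefE2 κ θ ξ v ρ t k : ℝ) : ℂ) * ((hh τ ^ 2 : ℝ) : ℂ)) =
      ((hh τ ^ 3 * g τ : ℝ) : ℂ) := by
    rw [← g1, he, rE, hh_sq g5, div_eq_mul_inv]
    push_cast
    ring
  rw [hmain, Complex.norm_real, Real.norm_eq_abs, Real.norm_eq_abs, abs_mul, mul_comm]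
  exact mul_le_mul_of_nonneg_right g3 (abs_nonneg _)

end
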